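/- arXiv:1312.4065 — 8 statements merged into one kernel-verified Lean document; each statement's English description precedes it below -/
import Mathlib

section
/- Let q ∈ L^∞([0,1]) be a bounded measurable complex-valued function. Suppose there exist constants C, C̃ > 0 and a sequence of complex numbers (q_k)_{k≥0} such that |q_k| ≤ C̃^{k+1} k^k for all k ≥ 0 (with 0^0 := 1), and such that for all τ > 0 one has |Lq(τ) − Σ_{k=0}^{⌊τ/C⌋} q_k τ^{−(k+1)}| ≤ e^{−τ/C̃}. Then q is analytic in a neighborhood of t = 0: there exists ε > 0 such that the power series Σ_{k=0}^∞ (q_k/k!) t^k converges absolutely for |t| < ε and q(t) = Σ_{k=0}^∞ (q_k/k!) t^k for almost every t ∈ [0, ε). -/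
open MeasureTheory

lemma aux_exp_hasSum (y : ℝ) :
    HasSum (fun k : ℕ => y ^ (k+1) / ((k+1).factorial : ℝ)) (Real.exp y - 1) := by
  have h := NormedSpace.expSeries_div_hasSum_exp (𝔸 := ℝ) y
  rw [← Real.exp_eq_exp_ℝ] at h
  rw [hasSum_nat_add_iff (f := fun k : ℕ => y ^ k / (k.factorial : ℝ)) 1]
  simpa using h

lemma aux_bound (h : ℝ → ℂ) (hh : IntervalIntegrable h volume 0 1) (K c : ℝ)
    (hK : ∀ τ : ℝ, 1 ≤ τ →
      ‖∫ t in (0:ℝ)..1, Complex.exp (-((t : ℂ) * (τ : ℂ))) * h t‖ ≤ K * Real.exp (-c * τ))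
    (n : ℕ) (hn : 1 ≤ n) (x : ℝ) :
    ‖∫ t in (0:ℝ)..1, (((1 - Real.exp (-Real.exp (n * (x - t)))) : ℝ) : ℂ) * h t‖
      ≤ K * (Real.exp (Real.exp (n * (x - c))) - 1) := by
  have hn' : (1:ℝ) ≤ n := by exact_mod_cast hn
  have hhi : IntegrableOn h (Set.Ioc 0 1) := by
    rwa [intervalIntegrable_iff_integrableOn_Ioc_of_le zero_le_one] at hh
  set y : ℝ → ℝ := fun t => Real.exp (n * (x - t)) with hy
  set F : ℕ → ℝ → ℂ := fun k t => ((-((-y t) ^ (k+1) / ((k+1).factorial : ℝ)) : ℝ) : ℂ) * h t with hF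
  set B : ℝ := Real.exp (n * |x|) with hB
  have hyB : ∀ t ∈ Set.Ioc (0:ℝ) 1, y t ≤ B := by
    intro t ht
    simp only [hy, hB]
    apply Real.exp_le_exp.2
    apply mul_le_mul_of_nonneg_left _ (by positivity)
    linarith [le_abs_self x, ht.1]
  have hy0 : ∀ t, 0 < y t := fun t => Real.exp_pos _
  have hnorm : ∀ k, ∀ t ∈ Set.Ioc (0:ℝ) 1, ‖F k t‖ ≤ B ^ (k+1) / ((k+1).factorial : ℝ) * ‖h t‖ := by
    intro k t ht
    simp only [hF, norm_mul, Complex.norm_real, norm_neg, norm_div, norm_pow, Real.norm_eq_abs]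
    rw [abs_of_pos (hy0 t), abs_of_nonneg (by positivity : (0:ℝ) ≤ ((k+1).factorial : ℝ))]
    gcongr
    exact hyB t ht
  have hFm : ∀ k, AEStronglyMeasurable (F k) (volume.restrict (Set.Ioc 0 1)) := by
    intro k
    apply AEStronglyMeasurable.mul _ hhi.aestronglyMeasurable
    apply Continuous.aestronglyMeasurable
    simp only [hy]
    fun_prop
  have hFi : ∀ k, Integrable (F k) (volume.restrict (Set.Ioc 0 1)) := by
    intro k
    refine Integrable.mono' (hhi.norm.const_mul (B ^ (k+1) / ((k+1).factorial : ℝ))) (hFm k) ?_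
    exact (ae_restrict_iff' measurableSet_Ioc).2 (Filter.Eventually.of_forall (hnorm k))
  have hsum : Summable fun k => ∫ t in Set.Ioc 0 1, ‖F k t‖ := by
    refine Summable.of_nonneg_of_le (fun k => integral_nonneg (fun t => norm_nonneg _))
      (fun k => ?_) ((aux_exp_hasSum B).summable.mul_right (∫ t in Set.Ioc 0 1, ‖h t‖))
    rw [← integral_const_mul]
    exact setIntegral_mono_on (hFi k).norm (hhi.norm.const_mul _) measurableSet_Ioc (hnorm k)
  have key := hasSum_integral_of_summable_integral_norm hFi hsum
  have e1 : ∀ t, ∑' k, F k t = (((1 - Real.exp (-Real.exp (n * (x - t)))) : ℝ) : ℂ) * h t := by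
    intro t
    have h1 := ((Complex.hasSum_ofReal.2 (aux_exp_hasSum (-y t)).neg)).mul_right (h t)
    rw [h1.tsum_eq]
    simp [hy]
  have e2 : ∀ k, ‖∫ t in Set.Ioc 0 1, F k t‖ ≤
      K * ((Real.exp (n * (x - c))) ^ (k+1) / ((k+1).factorial : ℝ)) := by
    intro k
    have e3 : ∀ t : ℝ, F k t = ((-((-1) ^ (k+1) * Real.exp (n * x * (k+1)) / ((k+1).factorial : ℝ)) : ℝ) : ℂ)
        * (Complex.exp (-((t : ℂ) * (((n * (k+1) : ℝ)) : ℂ))) * h t) := by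
      intro t
      have : -((-y t) ^ (k+1) / ((k+1).factorial : ℝ)) =
        (-((-1) ^ (k+1) * Real.exp (n * x * (k+1)) / ((k+1).factorial : ℝ))) * Real.exp (-(t * (n * (k+1)))) := by
        have : y t ^ (k+1) = Real.exp (n * x * (k+1)) * Real.exp (-(t * (n * (k+1)))) := by
          simp only [hy]
          rw [← Real.exp_nat_mul, ← Real.exp_add]
          congr 1
          push_cast
          ring
        rw [neg_pow, this]
        ring
      simp only [hF]
      rw [this]
      push_cast
      ring
    simp_rw [e3]
    rw [integral_const_mul, norm_mul, ← intervalIntegral.integral_of_le zero_le_one]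
    have h2 := hK (n * (k+1)) (by nlinarith [(Nat.cast_nonneg k : (0:ℝ) ≤ k)])
    rw [Complex.norm_real]
    have h3 : ‖(-((-1) ^ (k+1) * Real.exp (n * x * (k+1)) / ((k+1).factorial : ℝ)))‖
        = Real.exp (n * x * (k+1)) / ((k+1).factorial : ℝ) := by
      simp [norm_mul, norm_pow, norm_div]
    rw [h3]
    refine (mul_le_mul_of_nonneg_left h2 (by positivity)).trans (le_of_eq ?_)
    have : Real.exp (n * (x - c)) ^ (k+1) = Real.exp (n * x * (k+1)) * Real.exp (-c * (n * (k+1))) := by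
      rw [← Real.exp_nat_mul, ← Real.exp_add]
      congr 1
      push_cast
      ring
    rw [this]
    ring
  rw [intervalIntegral.integral_of_le zero_le_one]
  simp_rw [← e1]
  rw [← key.tsum_eq]
  exact tsum_of_norm_bounded ((aux_exp_hasSum _).mul_left K) e2

lemma aux_zero (h : ℝ → ℂ) (hh : IntervalIntegrable h volume 0 1) (K c : ℝ) 
    (hK : ∀ τ : ℝ, 1 ≤ τ →
      ‖∫ t in (0:ℝ)..1, Complex.exp (-((t : ℂ) * (τ : ℂ))) * h t‖ ≤ K * Real.exp (-c * τ))
    (x : ℝ) (hx0 : 0 < x) (hx1 : x < 1) (hxc : x < c) :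
    ∫ t in (0:ℝ)..x, h t = 0 := by
  have hhi : IntegrableOn h (Set.Ioc 0 1) := by
    rwa [intervalIntegrable_iff_integrableOn_Ioc_of_le zero_le_one] at hh
  have l1 : Filter.Tendsto (fun n : ℕ => ∫ t in (0:ℝ)..1, (((1 - Real.exp (-Real.exp (n * (x - t)))) : ℝ) : ℂ) * h t)
      Filter.atTop (nhds (∫ t in (0:ℝ)..1, (Set.Iic x).indicator h t)) := by
    apply intervalIntegral.tendsto_integral_filter_of_dominated_convergence (fun t => ‖h t‖)
    · refine Filter.Eventually.of_forall fun n => ?_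
      rw [Set.uIoc_of_le zero_le_one]
      apply AEStronglyMeasurable.mul _ hhi.aestronglyMeasurable
      apply Continuous.aestronglyMeasurable
      fun_prop
    · refine Filter.Eventually.of_forall fun n => Filter.Eventually.of_forall fun t _ => ?_
      rw [norm_mul, Complex.norm_real, Real.norm_eq_abs]
      have : |1 - Real.exp (-Real.exp (n * (x - t)))| ≤ 1 := by
        have h1 := Real.exp_pos (-Real.exp (n * (x - t)))
        have h2 : Real.exp (-Real.exp (n * (x - t))) ≤ 1 := 
          Real.exp_le_one_iff.2 (by linarith [Real.exp_pos (n * (x - t))])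
        rw [abs_le]; constructor <;> linarith
      nlinarith [norm_nonneg (h t)]
    · exact hh.norm
    · have : ∀ᵐ t : ℝ, t ≠ x := by simp [ae_iff, measure_singleton]
      filter_upwards [this] with t ht _
      have hnat : Filter.Tendsto (fun n : ℕ => (n:ℝ)) Filter.atTop Filter.atTop := tendsto_natCast_atTop_atTop
      rcases lt_or_gt_of_ne ht with hlt | hgt
      · rw [Set.indicator_of_mem (by exact hlt.le)]
        have a1 : Filter.Tendsto (fun n : ℕ => Real.exp (n * (x - t))) Filter.atTop Filter.atTop :=
          Real.tendsto_exp_atTop.comp (hnat.atTop_mul_const (by linarith))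
        have a2 : Filter.Tendsto (fun n : ℕ => 1 - Real.exp (-Real.exp (n * (x - t)))) Filter.atTop (nhds (1 - 0)) :=
          (Real.tendsto_exp_neg_atTop_nhds_zero.comp a1).const_sub 1
        have a3 := ((Complex.continuous_ofReal.tendsto _).comp a2).mul_const (h t)
        simpa [Function.comp_def] using a3
      · rw [Set.indicator_of_notMem (by simpa using hgt)]
        have a1 : Filter.Tendsto (fun n : ℕ => Real.exp (n * (x - t))) Filter.atTop (nhds 0) :=
          Real.tendsto_exp_atBot.comp (hnat.atTop_mul_const_of_neg (by linarith))
        have a2 : Filter.Tendsto (fun n : ℕ => 1 - Real.exp (-Real.exp (n * (x - t)))) Filter.atTop (nhds (1 - Real.exp (-0))) :=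
          ((Real.continuous_exp.tendsto _).comp a1.neg).const_sub 1
        have a3 := ((Complex.continuous_ofReal.tendsto _).comp a2).mul_const (h t)
        simpa [Function.comp_def] using a3
  have l2 : Filter.Tendsto (fun n : ℕ => K * (Real.exp (Real.exp (n * (x - c))) - 1)) Filter.atTop (nhds 0) := by
    have a1 : Filter.Tendsto (fun n : ℕ => Real.exp (n * (x - c))) Filter.atTop (nhds 0) :=
      Real.tendsto_exp_atBot.comp (tendsto_natCast_atTop_atTop.atTop_mul_const_of_neg (by linarith))
    have a2 := (((Real.continuous_exp.tendsto _).comp a1).sub_const 1).const_mul K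
    simpa [Function.comp_def] using a2
  have l3 := squeeze_zero_norm' (Filter.eventually_atTop.2 ⟨1, fun n hn => aux_bound h hh K c hK n hn x⟩) l2
  have l4 := tendsto_nhds_unique l1 l3
  rw [intervalIntegral.integral_of_le zero_le_one, setIntegral_indicator measurableSet_Iic] at l4
  rw [intervalIntegral.integral_of_le hx0.le, ← l4]
  congr 2
  ext t; simp only [Set.mem_Ioc, Set.mem_inter_iff, Set.mem_Iic]
  constructor
  · rintro ⟨a, b⟩; exact ⟨⟨a, by linarith⟩, b⟩
  · rintro ⟨⟨a, _⟩, b⟩; exact ⟨a, b⟩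

lemma aux_ae (h : ℝ → ℂ) (hh : IntervalIntegrable h volume 0 1) (K c : ℝ) (hc1 : c ≤ 1)
    (hK : ∀ τ : ℝ, 1 ≤ τ →
      ‖∫ t in (0:ℝ)..1, Complex.exp (-((t : ℂ) * (τ : ℂ))) * h t‖ ≤ K * Real.exp (-c * τ)) :
    ∀ᵐ t ∂(volume.restrict (Set.Ico (0:ℝ) c)), h t = 0 := by
  rw [ae_restrict_iff' measurableSet_Ico]
  have : ∀ᵐ t : ℝ, t ≠ 0 := by simp [ae_iff, measure_singleton]
  filter_upwards [this, hh.ae_hasDerivAt_integral] with t ht0 ht htc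
  have ht0' : 0 < t := lt_of_le_of_ne htc.1 (Ne.symm ht0)
  rw [Set.uIcc_of_le zero_le_one] at ht
  have hd := ht ⟨htc.1, by linarith [htc.2]⟩ 0 ⟨le_rfl, zero_le_one⟩
  have hz : (fun x => ∫ t in (0:ℝ)..x, h t) =ᶠ[nhds t] fun _ => 0 := by
    filter_upwards [Ioo_mem_nhds ht0' htc.2] with x hx
    exact aux_zero h hh K c hK x hx.1 (by linarith [hx.2]) hx.2
  exact hd.unique ((hasDerivAt_const t (0:ℂ)).congr_of_eventuallyEq hz)

lemma aux_coef (Ct : ℝ) (hCt : 0 < Ct) (qk : ℕ → ℂ)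
    (hqk : ∀ k : ℕ, ‖qk k‖ ≤ Ct ^ (k + 1) * (k : ℝ) ^ k) (ε : ℝ) (hε : 0 ≤ ε)
    (hε1 : ε * (Ct * Real.exp 2) ≤ 1) (k : ℕ) :
    ‖qk k / (k.factorial : ℂ)‖ * ε ^ k ≤ Ct * Real.exp (-1) ^ k := by
  have h1 : (k:ℝ) ^ k / (k.factorial : ℝ) ≤ Real.exp k := Real.pow_div_factorial_le_exp _ (by positivity) k
  rw [norm_div, Complex.norm_natCast]
  calc ‖qk k‖ / (k.factorial:ℝ) * ε ^ k ≤ (Ct ^ (k + 1) * (k : ℝ) ^ k) / (k.factorial:ℝ) * ε ^ k := by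
        gcongr; exact hqk k
    _ = Ct ^ (k+1) * ε ^ k * ((k:ℝ) ^ k / (k.factorial : ℝ)) := by ring
    _ ≤ Ct ^ (k+1) * ε ^ k * Real.exp k := by gcongr
    _ = Ct * (ε * (Ct * Real.exp 2)) ^ k * Real.exp (-1) ^ k := by
        rw [mul_pow, mul_pow, ← Real.exp_nat_mul, ← Real.exp_nat_mul]
        have : Real.exp k = Real.exp (k * 2) * Real.exp (k * -1) := by
          rw [← Real.exp_add]; congr 1; ring
        rw [this]; ring
    _ ≤ Ct * 1 * Real.exp (-1) ^ k := by
        gcongr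
        exact pow_le_one₀ (by positivity) hε1
    _ = _ := by ring

lemma aux_gamma_int (k : ℕ) (τ : ℝ) (hτ : 0 < τ) :
    ∫ t in Set.Ioi (0:ℝ), t ^ k * Real.exp (-(τ * t)) = (k.factorial : ℝ) / τ ^ (k+1) := by
  have h := Real.integral_rpow_mul_exp_neg_mul_Ioi (a := (k+1 : ℝ)) (r := τ) (by positivity) hτ
  rw [Real.Gamma_nat_eq_factorial] at h
  simp only [add_sub_cancel_right, Real.rpow_natCast] at h
  rw [h]
  have : ((k:ℝ)+1) = ((k+1 : ℕ) : ℝ) := by push_cast; ring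
  rw [this, Real.rpow_natCast]
  rw [one_div, inv_pow]; ring

lemma aux_gamma_integrable (k : ℕ) (τ : ℝ) (hτ : 0 < τ) :
    IntegrableOn (fun t : ℝ => t ^ k * Real.exp (-(τ * t))) (Set.Ioi 0) := by
  by_contra hcon
  have h := aux_gamma_int k τ hτ
  rw [integral_undef hcon] at h
  have : 0 < (k.factorial : ℝ) / τ ^ (k+1) := by positivity
  linarith

lemma aux_gamma (k : ℕ) (τ ε : ℝ) (hτ : 0 < τ) (hε : 0 < ε) :
    |(k.factorial : ℝ) / τ ^ (k+1) - ∫ t in (0:ℝ)..ε, t ^ k * Real.exp (-(τ * t))| ≤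
      Real.exp (-(ε * τ / 2)) * ((k.factorial : ℝ) / (τ / 2) ^ (k+1)) := by
  have hi := aux_gamma_integrable k τ hτ
  have hi2 := aux_gamma_integrable k (τ/2) (by positivity)
  have hsub : Set.Ioi ε ⊆ Set.Ioi 0 := Set.Ioi_subset_Ioi hε.le
  rw [← aux_gamma_int k τ hτ, ← aux_gamma_int k (τ/2) (by positivity),
    intervalIntegral.integral_of_le hε.le, ← Set.Ioc_union_Ioi_eq_Ioi hε.le,
    setIntegral_union (Set.Ioc_disjoint_Ioi le_rfl) measurableSet_Ioi
      (hi.mono_set Set.Ioc_subset_Ioi_self) (hi.mono_set hsub), add_sub_cancel_left,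
    Set.Ioc_union_Ioi_eq_Ioi hε.le, abs_of_nonneg, ← integral_const_mul]
  · refine (setIntegral_mono_on (hi.mono_set hsub) ((hi2.mono_set hsub).const_mul _) measurableSet_Ioi ?_).trans
      (setIntegral_mono_set (hi2.const_mul _) ?_ hsub.eventuallyLE)
    · intro t ht
      have ht' : ε < t := ht
      have : Real.exp (-(τ * t)) ≤ Real.exp (-(ε * τ / 2)) * Real.exp (-(τ / 2 * t)) := by
        rw [← Real.exp_add]
        apply Real.exp_le_exp.2
        nlinarith
      have h0 : 0 ≤ t ^ k := pow_nonneg (by linarith) k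
      calc _ ≤ t ^ k * (Real.exp (-(ε * τ / 2)) * Real.exp (-(τ / 2 * t))) := by gcongr
        _ = _ := by ring
    · refine (ae_restrict_iff' measurableSet_Ioi).2 (Filter.Eventually.of_forall fun t ht => ?_)
      have h0 : 0 < t := ht
      simp only [Pi.zero_apply]
      positivity
  · refine setIntegral_nonneg measurableSet_Ioi fun t ht => ?_
    have h0 : 0 < t := hsub ht
    positivity

lemma aux_cont (q : ℝ → ℂ) (hq : IntervalIntegrable q volume 0 1) (τ₀ : ℝ) (hτ₀ : 0 < τ₀) :
    ContinuousAt (fun τ : ℝ => ∫ t in (0:ℝ)..1, Complex.exp (-((t : ℂ) * (τ : ℂ))) * q t) τ₀ := by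
  have hhi : IntegrableOn q (Set.Ioc 0 1) := by
    rwa [intervalIntegrable_iff_integrableOn_Ioc_of_le zero_le_one] at hq
  apply intervalIntegral.continuousAt_of_dominated_interval (bound := fun t => ‖q t‖)
  · refine Filter.Eventually.of_forall fun n => ?_
    rw [Set.uIoc_of_le zero_le_one]
    apply AEStronglyMeasurable.mul _ hhi.aestronglyMeasurable
    apply Continuous.aestronglyMeasurable
    fun_prop
  · filter_upwards [lt_mem_nhds hτ₀] with τ hτ
    refine Filter.Eventually.of_forall fun t ht => ?_
    rw [Set.uIoc_of_le zero_le_one] at ht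
    rw [norm_mul, Complex.norm_exp]
    have : Real.exp (-((t : ℂ) * (τ : ℂ))).re ≤ 1 := by
      rw [Real.exp_le_one_iff]
      simp only [Complex.neg_re, Complex.mul_re, Complex.ofReal_re, Complex.ofReal_im]
      nlinarith [ht.1]
    nlinarith [norm_nonneg (q t)]
  · exact hq.norm
  · refine Filter.Eventually.of_forall fun t ht => ?_
    apply Continuous.continuousAt
    fun_prop

lemma aux_jump (q : ℝ → ℂ) (hq : IntervalIntegrable q volume 0 1)
    (C Ct : ℝ) (hC : 0 < C) (qk : ℕ → ℂ)
    (hL : ∀ τ : ℝ, 0 < τ →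
      ‖(∫ t in (0:ℝ)..1, Complex.exp (-((t : ℂ) * (τ : ℂ))) * q t) -
          ∑ k ∈ Finset.range (⌊τ / C⌋₊ + 1), qk k / (τ : ℂ) ^ (k + 1)‖
        ≤ Real.exp (-τ / Ct)) (k : ℕ) (hk : 1 ≤ k) :
    ‖qk k‖ / (C * k) ^ (k+1) ≤ 2 * Real.exp (-(C * k) / Ct) := by
  have hk' : (1:ℝ) ≤ k := by exact_mod_cast hk
  set T : ℝ := C * k with hT
  have hT0 : 0 < T := by positivity
  have h1 := hL T hT0
  have hfl : ⌊T / C⌋₊ = k := by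
    rw [hT, mul_div_cancel_left₀ _ hC.ne', Nat.floor_natCast]
  rw [hfl, Finset.sum_range_succ] at h1
  have hleft : ∀ᶠ τ : ℝ in nhdsWithin T (Set.Iio T), ‖(∫ t in (0:ℝ)..1, Complex.exp (-((t : ℂ) * (τ : ℂ))) * q t) -
          ∑ k ∈ Finset.range k, qk k / (τ : ℂ) ^ (k + 1)‖ ≤ Real.exp (-τ / Ct) := by
    have : Set.Ioo (max 0 (C * (k-1))) T ∈ nhdsWithin T (Set.Iio T) := by
      apply Ioo_mem_nhdsLT
      apply max_lt hT0
      rw [hT]; nlinarith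
    filter_upwards [this] with τ hτ
    have hτ0 : 0 < τ := lt_of_le_of_lt (le_max_left _ _) hτ.1
    have hτ1 : C * (k-1) < τ := lt_of_le_of_lt (le_max_right _ _) hτ.1
    have h2 := hL τ hτ0
    have : ⌊τ / C⌋₊ + 1 = k := by
      have : ⌊τ / C⌋₊ = k - 1 := by
        rw [Nat.floor_eq_iff (by positivity), Nat.cast_sub hk, le_div_iff₀ hC, div_lt_iff₀ hC]
        push_cast
        constructor
        · linarith
        · have := hτ.2; rw [hT] at this; linarith
      omega
    rwa [this] at h2
  have hcL := aux_cont q hq T hT0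
  have hcS : ContinuousAt (fun τ : ℝ => ∑ k ∈ Finset.range k, qk k / (τ : ℂ) ^ (k + 1)) T := by
    apply tendsto_finsetSum
    intro i _
    apply ContinuousAt.div continuousAt_const
    · apply Continuous.continuousAt; fun_prop
    · apply pow_ne_zero; exact_mod_cast hT0.ne'
  have hcR : ContinuousAt (fun τ : ℝ => Real.exp (-τ / Ct)) T := by
    apply Continuous.continuousAt; fun_prop
  have h3 := le_of_tendsto_of_tendsto ((hcL.sub hcS).norm.tendsto.mono_left nhdsWithin_le_nhds)
    (hcR.tendsto.mono_left nhdsWithin_le_nhds) hleft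
  have h4 : ‖qk k‖ / T ^ (k+1) = ‖qk k / (T : ℂ) ^ (k + 1)‖ := by
    rw [norm_div, norm_pow, Complex.norm_real, Real.norm_eq_abs, abs_of_pos hT0]
  rw [h4]
  set Lq := ∫ t in (0:ℝ)..1, Complex.exp (-((t : ℂ) * (T : ℂ))) * q t
  set S := ∑ k ∈ Finset.range k, qk k / (T : ℂ) ^ (k + 1)
  have h5 : qk k / (T : ℂ) ^ (k + 1) = (Lq - S) - (Lq - (S + qk k / (T : ℂ) ^ (k + 1))) := by ring
  rw [h5]
  refine (norm_sub_le _ _).trans ?_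
  have h3' : ‖Lq - S‖ ≤ Real.exp (-T / Ct) := h3
  linarith

lemma aux_geom (ρ : ℝ) (h0 : 0 ≤ ρ) (h1 : ρ < 1) (m n : ℕ) :
    ∑ k ∈ Finset.Ico m n, ρ ^ k ≤ ρ ^ m / (1 - ρ) := by
  rw [div_eq_mul_inv, ← tsum_geometric_of_lt_one h0 h1, ← tsum_mul_left, Finset.sum_Ico_eq_sum_range]
  simp_rw [pow_add]
  exact ((summable_geometric_of_lt_one h0 h1).mul_left _).sum_le_tsum _ (fun i _ => by positivity)

lemma aux_floor (b C' τ : ℝ) (hb : 0 ≤ b) : 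
    Real.exp (-b) ^ (⌊τ / C'⌋₊ + 1) ≤ Real.exp (-(b / C' * τ)) := by
  rw [← Real.exp_nat_mul]
  apply Real.exp_le_exp.2
  have h := (Nat.lt_floor_add_one (τ / C')).le
  have h2 := mul_le_mul_of_nonneg_right h hb
  push_cast
  have : b / C' * τ = τ / C' * b := by ring
  rw [this]; linarith

lemma aux_mid (q : ℝ → ℂ) (hq : IntervalIntegrable q volume 0 1)
    (C Ct C' : ℝ) (hC : 0 < C) (hCt : 0 < Ct) (hCC : C ≤ C') (qk : ℕ → ℂ)
    (hL : ∀ τ : ℝ, 0 < τ →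
      ‖(∫ t in (0:ℝ)..1, Complex.exp (-((t : ℂ) * (τ : ℂ))) * q t) -
          ∑ k ∈ Finset.range (⌊τ / C⌋₊ + 1), qk k / (τ : ℂ) ^ (k + 1)‖
        ≤ Real.exp (-τ / Ct)) (τ : ℝ) (hτ : 0 < τ) :
    ‖(∫ t in (0:ℝ)..1, Complex.exp (-((t : ℂ) * (τ : ℂ))) * q t) -
          ∑ k ∈ Finset.range (⌊τ / C'⌋₊ + 1), qk k / (τ : ℂ) ^ (k + 1)‖
        ≤ Real.exp (-(1 / Ct * τ)) + 2 / (1 - Real.exp (-(C/Ct))) * Real.exp (-(C / Ct / C' * τ)) := by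
  set N := ⌊τ / C⌋₊ with hN
  set N' := ⌊τ / C'⌋₊ with hN'
  have hNN : N' ≤ N := Nat.floor_le_floor (by gcongr)
  have hρ0 : 0 ≤ Real.exp (-(C/Ct)) := (Real.exp_pos _).le
  have hρ1 : Real.exp (-(C/Ct)) < 1 := by
    rw [Real.exp_lt_one_iff]; have : 0 < C / Ct := by positivity
    linarith
  have hsplit : ∑ k ∈ Finset.range (N+1), qk k / (τ : ℂ) ^ (k + 1) =
      ∑ k ∈ Finset.range (N'+1), qk k / (τ : ℂ) ^ (k + 1) +
      ∑ k ∈ Finset.Ico (N'+1) (N+1), qk k / (τ : ℂ) ^ (k + 1) :=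
    (Finset.sum_range_add_sum_Ico _ (by omega)).symm
  have hmid : ‖∑ k ∈ Finset.Ico (N'+1) (N+1), qk k / (τ : ℂ) ^ (k + 1)‖ ≤
      2 / (1 - Real.exp (-(C/Ct))) * Real.exp (-(C / Ct / C' * τ)) := by
    have hterm : ∀ k ∈ Finset.Ico (N'+1) (N+1), ‖qk k / (τ : ℂ) ^ (k + 1)‖ ≤ 2 * Real.exp (-(C/Ct)) ^ k := by
      intro k hk
      rw [Finset.mem_Ico] at hk
      have hk1 : 1 ≤ k := by omega
      have hk' : (1:ℝ) ≤ k := by exact_mod_cast hk1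
      have hj := aux_jump q hq C Ct hC qk hL k hk1
      have hkC : C * k ≤ τ := by
        have : (k:ℝ) ≤ τ / C := (Nat.le_floor_iff (by positivity)).1 (by omega : k ≤ N)
        rw [le_div_iff₀ hC] at this; linarith
      have e : Real.exp (-(C/Ct)) ^ k = Real.exp (-(C * k) / Ct) := by
        rw [← Real.exp_nat_mul]; congr 1; ring
      rw [e]
      refine le_trans ?_ hj
      rw [norm_div, norm_pow, Complex.norm_real, Real.norm_eq_abs, abs_of_pos hτ]
      gcongr
    refine (norm_sum_le_of_le _ hterm).trans ?_
    rw [← Finset.mul_sum]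
    have h1 := aux_geom _ hρ0 hρ1 (N'+1) (N+1)
    have h2 := aux_floor (C/Ct) C' τ (by positivity)
    have h3 : 0 < 1 - Real.exp (-(C/Ct)) := by linarith
    calc _ ≤ 2 * (Real.exp (-(C/Ct)) ^ (N'+1) / (1 - Real.exp (-(C/Ct)))) := by gcongr
      _ ≤ 2 * (Real.exp (-(C / Ct / C' * τ)) / (1 - Real.exp (-(C/Ct)))) := by gcongr
      _ = _ := by ring
  have h1 := hL τ hτ
  rw [hsplit] at h1
  have e : -τ / Ct = -(1 / Ct * τ) := by ring
  rw [e] at h1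
  set A := ∑ k ∈ Finset.range (N'+1), qk k / (τ : ℂ) ^ (k + 1)
  set B := ∑ k ∈ Finset.Ico (N'+1) (N+1), qk k / (τ : ℂ) ^ (k + 1)
  set L := ∫ t in (0:ℝ)..1, Complex.exp (-((t : ℂ) * (τ : ℂ))) * q t
  have : L - A = (L - (A + B)) + B := by ring
  rw [this]
  exact (norm_add_le _ _).trans (add_le_add h1 hmid)

lemma aux_head (Ct C' : ℝ) (hCt : 0 < Ct) (hCC : 4 * Ct ≤ C') (qk : ℕ → ℂ)
    (hqk : ∀ k : ℕ, ‖qk k‖ ≤ Ct ^ (k + 1) * (k : ℝ) ^ k) (ε τ : ℝ) (hε : 0 < ε) (hτ : 1 ≤ τ) :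
    ‖∑ k ∈ Finset.range (⌊τ / C'⌋₊ + 1), (qk k / (τ : ℂ) ^ (k + 1) -
      qk k / (k.factorial : ℂ) * ((∫ t in (0:ℝ)..ε, t ^ k * Real.exp (-(τ * t)) : ℝ) : ℂ))‖ ≤
      4 * Ct * Real.exp (-(ε / 2 * τ)) := by
  have hτ0 : 0 < τ := by linarith
  have hC' : 0 < C' := by linarith
  have hterm : ∀ k ∈ Finset.range (⌊τ / C'⌋₊ + 1), ‖(qk k / (τ : ℂ) ^ (k + 1) -
      qk k / (k.factorial : ℂ) * ((∫ t in (0:ℝ)..ε, t ^ k * Real.exp (-(τ * t)) : ℝ) : ℂ))‖ ≤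
      2 * Ct * Real.exp (-(ε / 2 * τ)) * (1/2) ^ k := by
    intro k hk
    have hkN : k ≤ ⌊τ / C'⌋₊ := by rw [Finset.mem_range] at hk; omega
    have hk2 : (k:ℝ) ≤ τ / C' := (Nat.le_floor_iff (by positivity)).1 hkN
    have hk3 : 2 * Ct * k / τ ≤ 1 / 2 := by
      rw [le_div_iff₀ hC'] at hk2
      rw [div_le_iff₀ hτ0]
      nlinarith [(Nat.cast_nonneg k : (0:ℝ) ≤ k)]
    have hf : (k.factorial : ℂ) ≠ 0 := by exact_mod_cast k.factorial_ne_zero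
    have e : (qk k / (τ : ℂ) ^ (k + 1) -
      qk k / (k.factorial : ℂ) * ((∫ t in (0:ℝ)..ε, t ^ k * Real.exp (-(τ * t)) : ℝ) : ℂ)) =
      qk k / (k.factorial : ℂ) * (((k.factorial : ℝ) / τ ^ (k+1) - ∫ t in (0:ℝ)..ε, t ^ k * Real.exp (-(τ * t)) : ℝ) : ℂ) := by
      rw [Complex.ofReal_sub]
      push_cast
      field_simp
    rw [e, norm_mul, Complex.norm_real, Real.norm_eq_abs, norm_div, Complex.norm_natCast]
    have hfp : (0:ℝ) < k.factorial := by positivity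
    calc _ ≤ (Ct ^ (k + 1) * (k : ℝ) ^ k) / (k.factorial:ℝ) * 
          (Real.exp (-(ε * τ / 2)) * ((k.factorial : ℝ) / (τ / 2) ^ (k+1))) := by
          gcongr
          · exact hqk k
          · exact aux_gamma k τ ε hτ0 hε
      _ = 2 * Ct * Real.exp (-(ε / 2 * τ)) * (2 * Ct * k / τ) ^ k * (1 / τ) := by
          have : -(ε * τ / 2) = -(ε / 2 * τ) := by ring
          rw [this, div_pow, div_pow, mul_pow, mul_pow, pow_succ 2, pow_succ τ, pow_succ Ct]
          field_simp
      _ ≤ 2 * Ct * Real.exp (-(ε / 2 * τ)) * (1/2) ^ k * 1 := by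
          gcongr
          rw [div_le_one hτ0]; exact hτ
      _ = _ := by ring
  refine (norm_sum_le_of_le _ hterm).trans ?_
  rw [← Finset.mul_sum]
  have h1 := aux_geom (1/2) (by norm_num) (by norm_num) 0 (⌊τ / C'⌋₊ + 1)
  rw [← Finset.range_eq_Ico] at h1
  have h2 : 0 < 2 * Ct * Real.exp (-(ε / 2 * τ)) := by positivity
  calc _ ≤ 2 * Ct * Real.exp (-(ε / 2 * τ)) * ((1/2)^0 / (1 - 1/2)) := by gcongr
    _ = _ := by ring

lemma aux_exp_le (d c τ : ℝ) (h : c ≤ d) (hτ : 0 ≤ τ) : Real.exp (-(d * τ)) ≤ Real.exp (-c * τ) := by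
  apply Real.exp_le_exp.2; nlinarith

theorem stmt_0 (q : ℝ → ℂ) (hq_meas : Measurable q) (M : ℝ)
    (hq_bdd : ∀ t ∈ Set.Icc (0:ℝ) 1, ‖q t‖ ≤ M)
    (C Ct : ℝ) (hC : 0 < C) (hCt : 0 < Ct) (qk : ℕ → ℂ)
    (hqk : ∀ k : ℕ, ‖qk k‖ ≤ Ct ^ (k + 1) * (k : ℝ) ^ k)
    (hL : ∀ τ : ℝ, 0 < τ →
      ‖(∫ t in (0:ℝ)..1, Complex.exp (-((t : ℂ) * (τ : ℂ))) * q t) -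
          ∑ k ∈ Finset.range (⌊τ / C⌋₊ + 1), qk k * (τ : ℂ) ^ (-((k : ℤ) + 1))‖
        ≤ Real.exp (-τ / Ct)) :
    ∃ ε > 0,
      (∀ t : ℝ, |t| < ε →
        Summable (fun k : ℕ => ‖qk k / (k.factorial : ℂ) * (t : ℂ) ^ k‖)) ∧
      (∀ᵐ t ∂(volume.restrict (Set.Ico (0:ℝ) ε)),
        q t = ∑' k : ℕ, qk k / (k.factorial : ℂ) * (t : ℂ) ^ k) := by
  have hL' : ∀ τ : ℝ, 0 < τ →
      ‖(∫ t in (0:ℝ)..1, Complex.exp (-((t : ℂ) * (τ : ℂ))) * q t) -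
          ∑ k ∈ Finset.range (⌊τ / C⌋₊ + 1), qk k / (τ : ℂ) ^ (k + 1)‖
        ≤ Real.exp (-τ / Ct) := by
    intro τ hτ
    have := hL τ hτ
    have e : ∀ k : ℕ, qk k * (τ : ℂ) ^ (-((k : ℤ) + 1)) = qk k / (τ : ℂ) ^ (k + 1) := by
      intro k
      rw [zpow_neg, div_eq_mul_inv]
      norm_cast
    simpa only [e] using this
  clear hL
  have hqi : IntegrableOn q (Set.Ioc 0 1) := by
    refine Measure.integrableOn_of_bounded (M := M) (by simp) hq_meas.aestronglyMeasurable ?_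
    exact (ae_restrict_iff' measurableSet_Ioc).2
      (Filter.Eventually.of_forall fun t ht => hq_bdd t ⟨ht.1.le, ht.2⟩)
  have hq : IntervalIntegrable q volume 0 1 := by
    rwa [intervalIntegrable_iff_integrableOn_Ioc_of_le zero_le_one]
  -- constants
  obtain ⟨ε, hε0, hε1, hε2⟩ : ∃ ε : ℝ, 0 < ε ∧ ε ≤ 1 ∧ ε * (Ct * Real.exp 2) ≤ 1 := by
    have hp : 0 < Ct * Real.exp 2 := by positivity
    refine ⟨min 1 (1 / (Ct * Real.exp 2)), by positivity, min_le_left _ _, ?_⟩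
    rw [← le_div_iff₀ hp]; exact min_le_right _ _
  obtain ⟨C', hC1, hC2⟩ : ∃ C' : ℝ, C ≤ C' ∧ 4 * Ct ≤ C' := ⟨max C (4*Ct), le_max_left _ _, le_max_right _ _⟩
  have hC' : 0 < C' := by linarith
  obtain ⟨c, hc0, hc1, hc2, hc3, hc4⟩ : ∃ c : ℝ, 0 < c ∧ c ≤ 1 / Ct ∧ c ≤ C / Ct / C' ∧ c ≤ ε / 2 ∧ c ≤ 1 / C' := by
    refine ⟨min (min (1/Ct) (C/Ct/C')) (min (ε/2) (1/C')), by positivity, ?_, ?_, ?_, ?_⟩ <;> simp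
  have hcoef := aux_coef Ct hCt qk hqk ε hε0.le hε2
  have hr1 : Real.exp (-1) < 1 := by rw [Real.exp_lt_one_iff]; norm_num
  have hgs : Summable fun k : ℕ => Ct * Real.exp (-1) ^ k :=
    (summable_geometric_of_lt_one (Real.exp_pos _).le hr1).mul_left Ct
  have hterm : ∀ k : ℕ, ∀ t : ℝ, |t| ≤ ε → ‖qk k / (k.factorial : ℂ) * (t : ℂ) ^ k‖ ≤ Ct * Real.exp (-1) ^ k := by
    intro k t ht
    refine le_trans ?_ (hcoef k)
    rw [norm_mul, norm_pow, Complex.norm_real, Real.norm_eq_abs]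
    gcongr
  set P : ℝ → ℂ := fun t => ∑' k : ℕ, qk k / (k.factorial : ℂ) * (t : ℂ) ^ k with hP
  have hPc : ContinuousOn P (Set.Icc 0 ε) := by
    refine continuousOn_tsum (fun k => ?_) hgs (fun k t ht => hterm k t ?_)
    · apply Continuous.continuousOn; fun_prop
    · rw [abs_of_nonneg ht.1]; exact ht.2
  have hPi : IntegrableOn P (Set.Ioc 0 ε) :=
    (hPc.integrableOn_Icc).mono_set Set.Ioc_subset_Icc_self
  have hset : Set.Ioc (0:ℝ) 1 ∩ Set.Iic ε = Set.Ioc 0 ε := by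
    ext t; simp only [Set.mem_Ioc, Set.mem_inter_iff, Set.mem_Iic]
    constructor
    · rintro ⟨⟨a, _⟩, b⟩; exact ⟨a, b⟩
    · rintro ⟨a, b⟩; exact ⟨⟨a, by linarith⟩, b⟩
  have hPind : IntegrableOn ((Set.Iic ε).indicator P) (Set.Ioc 0 1) := by
    rw [IntegrableOn, integrable_indicator_iff measurableSet_Iic, IntegrableOn,
      Measure.restrict_restrict measurableSet_Iic, Set.inter_comm, hset]
    exact hPi
  set h : ℝ → ℂ := fun t => q t - (Set.Iic ε).indicator P t with hh
  have hhi : IntervalIntegrable h volume 0 1 := by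
    rw [intervalIntegrable_iff_integrableOn_Ioc_of_le zero_le_one]
    exact hqi.sub hPind
  have hbd : ∀ τ : ℝ, 0 ≤ τ → ∀ t ∈ Set.Ioc (0:ℝ) 1, ‖Complex.exp (-((t : ℂ) * (τ : ℂ)))‖ ≤ 1 := by
    intro τ hτ t ht
    rw [Complex.norm_exp, Real.exp_le_one_iff]
    simp only [Complex.neg_re, Complex.mul_re, Complex.ofReal_re, Complex.ofReal_im]
    nlinarith [ht.1]
  have hei : ∀ τ : ℝ, 0 ≤ τ → ∀ f : ℝ → ℂ, IntegrableOn f (Set.Ioc 0 1) →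
      IntegrableOn (fun t : ℝ => Complex.exp (-((t : ℂ) * (τ : ℂ))) * f t) (Set.Ioc 0 1) := by
    intro τ hτ f hf
    refine Integrable.bdd_mul (c := 1) hf (Continuous.aestronglyMeasurable (by fun_prop)) ?_
    exact (ae_restrict_iff' measurableSet_Ioc).2 (Filter.Eventually.of_forall (hbd τ hτ))
  have hI : ∀ τ : ℝ, 0 ≤ τ → ∫ t in (0:ℝ)..1, Complex.exp (-((t : ℂ) * (τ : ℂ))) * h t =
      (∫ t in (0:ℝ)..1, Complex.exp (-((t : ℂ) * (τ : ℂ))) * q t) -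
      ∫ t in Set.Ioc 0 ε, Complex.exp (-((t : ℂ) * (τ : ℂ))) * P t := by
    intro τ hτ
    rw [intervalIntegral.integral_of_le zero_le_one, intervalIntegral.integral_of_le zero_le_one]
    simp only [hh, mul_sub]
    rw [integral_sub (hei τ hτ q hqi) (hei τ hτ _ hPind)]
    congr 1
    rw [← hset, ← setIntegral_indicator measurableSet_Iic]
    congr 1
    ext t
    by_cases ht : t ∈ Set.Iic ε
    · simp [Set.indicator_of_mem ht]
    · simp [Set.indicator_of_notMem ht]
  set G : ℝ → ℕ → ℝ := fun τ k => ∫ t in (0:ℝ)..ε, t ^ k * Real.exp (-(τ * t)) with hG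
  have hGb : ∀ τ : ℝ, 0 ≤ τ → ∀ k, |G τ k| ≤ ε ^ k := by
    intro τ hτ k
    have := intervalIntegral.norm_integral_le_of_norm_le_const (a := 0) (b := ε) (C := ε ^ k)
      (f := fun t => t ^ k * Real.exp (-(τ * t))) ?_
    · refine this.trans ?_
      rw [sub_zero, abs_of_pos hε0]
      exact mul_le_of_le_one_right (by positivity) hε1
    · intro t ht
      rw [Set.uIoc_of_le hε0.le] at ht
      rw [norm_mul, norm_pow, Real.norm_eq_abs, Real.norm_eq_abs, abs_of_pos ht.1, Real.abs_exp]
      have h1 : Real.exp (-(τ * t)) ≤ 1 := by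
        rw [Real.exp_le_one_iff]; nlinarith [ht.1]
      have h2 : t ^ k ≤ ε ^ k := pow_le_pow_left₀ ht.1.le ht.2 k
      calc _ ≤ ε ^ k * 1 := mul_le_mul h2 h1 (Real.exp_pos _).le (by positivity)
        _ = _ := mul_one _
  have haG : ∀ τ : ℝ, 0 ≤ τ → ∀ k, ‖qk k / (k.factorial : ℂ) * (G τ k : ℂ)‖ ≤ Ct * Real.exp (-1) ^ k := by
    intro τ hτ k
    refine le_trans ?_ (hcoef k)
    rw [norm_mul, Complex.norm_real, Real.norm_eq_abs]
    gcongr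
    exact hGb τ hτ k
  have hsumI : ∀ τ : ℝ, 0 ≤ τ → HasSum (fun k => qk k / (k.factorial : ℂ) * (G τ k : ℂ))
      (∫ t in Set.Ioc 0 ε, Complex.exp (-((t : ℂ) * (τ : ℂ))) * P t) := by
    intro τ hτ
    have key := hasSum_integral_of_dominated_convergence (μ := volume.restrict (Set.Ioc 0 ε))
      (F := fun (k:ℕ) (t:ℝ) => Complex.exp (-((t : ℂ) * (τ : ℂ))) * (qk k / (k.factorial : ℂ) * (t : ℂ) ^ k))
      (f := fun t => Complex.exp (-((t : ℂ) * (τ : ℂ))) * P t)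
      (bound := fun k _ => Ct * Real.exp (-1) ^ k)
      (fun k => Continuous.aestronglyMeasurable (by fun_prop)) ?_ ?_ ?_ ?_
    · have e : (fun k => qk k / (k.factorial : ℂ) * (G τ k : ℂ)) = fun k : ℕ => ∫ t in Set.Ioc 0 ε,
          Complex.exp (-((t : ℂ) * (τ : ℂ))) * (qk k / (k.factorial : ℂ) * (t : ℂ) ^ k) := by
        funext k
        simp only [hG]
        rw [← intervalIntegral.integral_ofReal, intervalIntegral.integral_of_le hε0.le,
          ← integral_const_mul]
        congr 1
        funext t
        push_cast
        rw [mul_comm (t : ℂ) (τ : ℂ)]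
        ring
      rw [e]
      exact key
    · intro k
      refine (ae_restrict_iff' measurableSet_Ioc).2 (Filter.Eventually.of_forall fun t ht => ?_)
      rw [norm_mul]
      have h1 := hbd τ hτ t ⟨ht.1, ht.2.trans hε1⟩
      have h2 := hterm k t (by rw [abs_of_pos ht.1]; exact ht.2)
      calc _ ≤ 1 * (Ct * Real.exp (-1) ^ k) := mul_le_mul h1 h2 (norm_nonneg _) zero_le_one
        _ = _ := one_mul _
    · exact Filter.Eventually.of_forall fun t => hgs
    · exact integrable_const _
    · refine (ae_restrict_iff' measurableSet_Ioc).2 (Filter.Eventually.of_forall fun t ht => ?_)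
      apply HasSum.mul_left
      apply Summable.hasSum
      exact Summable.of_norm_bounded hgs fun k => hterm k t (by rw [abs_of_pos ht.1]; exact ht.2)
  set K : ℝ := 1 + 2 / (1 - Real.exp (-(C/Ct))) + 4 * Ct + Ct / (1 - Real.exp (-1)) with hK
  have hmain : ∀ τ : ℝ, 1 ≤ τ →
      ‖∫ t in (0:ℝ)..1, Complex.exp (-((t : ℂ) * (τ : ℂ))) * h t‖ ≤ K * Real.exp (-c * τ) := by
    intro τ hτ
    have hτ0 : 0 < τ := by linarith
    rw [hI τ hτ0.le]
    have b1 := aux_mid q hq C Ct C' hC hCt hC1 qk hL' τ hτ0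
    have b2 := aux_head Ct C' hCt hC2 qk hqk ε τ hε0 hτ
    have hs := hsumI τ hτ0.le
    set N := ⌊τ / C'⌋₊ with hN
    have hs2 := hs.summable.sum_add_tsum_nat_add (N+1)
    rw [hs.tsum_eq] at hs2
    have b3 : ‖∑' k, qk (k+(N+1)) / ((k+(N+1)).factorial : ℂ) * (G τ (k+(N+1)) : ℂ)‖ ≤
        Ct / (1 - Real.exp (-1)) * Real.exp (-(1 / C' * τ)) := by
      have g := ((hasSum_geometric_of_lt_one (Real.exp_pos (-1)).le hr1).mul_left (Ct * Real.exp (-1) ^ (N+1)))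
      refine (tsum_of_norm_bounded g (fun k => ?_)).trans ?_
      · refine (haG τ hτ0.le _).trans (le_of_eq ?_)
        rw [pow_add]; ring
      · have h1 := aux_floor 1 C' τ zero_le_one
        have h3 : 0 < 1 - Real.exp (-1) := by linarith
        calc _ ≤ Ct * Real.exp (-(1 / C' * τ)) * (1 - Real.exp (-1))⁻¹ := by gcongr
          _ = _ := by ring
    rw [Finset.sum_sub_distrib] at b2
    rw [← hs2]
    set L := ∫ t in (0:ℝ)..1, Complex.exp (-((t : ℂ) * (τ : ℂ))) * q t
    set S := ∑ k ∈ Finset.range (N+1), qk k / (τ : ℂ) ^ (k + 1)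
    set D := ∑ k ∈ Finset.range (N+1), qk k / (k.factorial : ℂ) * (G τ k : ℂ)
    set R := ∑' k, qk (k+(N+1)) / ((k+(N+1)).factorial : ℂ) * (G τ (k+(N+1)) : ℂ)
    have b2' : ‖S - D‖ ≤ 4 * Ct * Real.exp (-(ε / 2 * τ)) := b2
    have e : L - (D + R) = (L - S) + (S - D) - R := by ring
    rw [e]
    refine (norm_sub_le _ _).trans ((add_le_add ((norm_add_le _ _).trans (add_le_add b1 b2')) b3).trans ?_)
    have hρ : 0 < 1 - Real.exp (-(C/Ct)) := by
      have : Real.exp (-(C/Ct)) < 1 := by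
        rw [Real.exp_lt_one_iff]; have : 0 < C / Ct := by positivity
        linarith
      linarith
    have h3 : 0 < 1 - Real.exp (-1) := by linarith
    have x1 := aux_exp_le _ c τ hc1 hτ0.le
    have x2 := aux_exp_le _ c τ hc2 hτ0.le
    have x3 := aux_exp_le _ c τ hc3 hτ0.le
    have x4 := aux_exp_le _ c τ hc4 hτ0.le
    calc _ ≤ Real.exp (-c * τ) + 2 / (1 - Real.exp (-(C/Ct))) * Real.exp (-c * τ) + 4 * Ct * Real.exp (-c * τ)
          + Ct / (1 - Real.exp (-1)) * Real.exp (-c * τ) := by gcongr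
      _ = _ := by rw [hK]; ring
  refine ⟨c, hc0, fun t ht => ?_, ?_⟩
  · exact Summable.of_nonneg_of_le (fun k => norm_nonneg _) (fun k => hterm k t (by linarith)) hgs
  · have := aux_ae h hhi K c (by linarith) hmain
    rw [ae_restrict_iff' measurableSet_Ico] at this ⊢
    filter_upwards [this] with t ht htc
    have h1 := ht htc
    have htm : t ∈ Set.Iic ε := by
      have := htc.2
      simp only [Set.mem_Iic]; linarith
    simp only [hh, Set.indicator_of_mem htm] at h1
    exact sub_eq_zero.1 h1
end

section
/- Let q : [0,1] → ℂ be continuous and suppose q is analytic near t = 0; precisely, suppose there exist a > 0, M > 0 and complex numbers (a_k)_{k≥0} with |a_k| ≤ M (2a)^{−k} such that q(t) = Σ_{k=0}^∞ a_k t^k for all t ∈ [0, 2a]. Set q_k := k! a_k. Then there exist constants C, C̃ > 0 such that |q_k| ≤ C̃^{k+1} k^k for all k ≥ 0 (with 0^0 := 1), and |Lq(τ) − Σ_{k=0}^{⌊τ/C⌋} q_k τ^{−(k+1)}| ≤ C̃ e^{−τ/C̃} for all τ ≥ 1. -/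
open MeasureTheory

lemma pow_mul_exp_le (k : ℕ) (s : ℝ) (hs : 0 ≤ s) : s ^ k * Real.exp (-s) ≤ k.factorial := by
  have h := Real.pow_div_factorial_le_exp s hs k
  have hk : (0:ℝ) < k.factorial := by exact_mod_cast k.factorial_pos
  rw [div_le_iff₀ hk] at h
  rw [Real.exp_neg, ← div_eq_mul_inv, div_le_iff₀ (Real.exp_pos s)]
  linarith

lemma tail_bound (k : ℕ) (b τ : ℝ) (hb : 0 < b) (hτ : 1 ≤ τ) :
    |(∫ t in (0:ℝ)..b, Real.exp (-(t * τ)) * t ^ k) - k.factorial * (τ ^ (k+1))⁻¹|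
      ≤ 2 * (k.factorial * (2 / τ) ^ k) * Real.exp (-(b * τ / 2)) := by
  have hτ0 : 0 < τ := by linarith
  have hfull : ∫ t in Set.Ioi (0:ℝ), Real.exp (-(t * τ)) * t ^ k = k.factorial * (τ ^ (k+1))⁻¹ := by
    have h := Real.integral_rpow_mul_exp_neg_mul_Ioi (a := (k:ℝ)+1) (r := τ) (by positivity) hτ0
    rw [Real.Gamma_nat_eq_factorial] at h
    rw [mul_comm (k.factorial : ℝ), ← inv_pow]
    have e : (1 / τ) ^ ((k:ℝ)+1) = (τ⁻¹) ^ (k+1) := by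
      rw [one_div]; exact_mod_cast Real.rpow_natCast _ (k+1)
    rw [e] at h
    rw [← h]
    refine setIntegral_congr_fun measurableSet_Ioi fun t ht => ?_
    simp only [add_sub_cancel_right, Real.rpow_natCast]
    rw [mul_comm, mul_comm τ]
  have hexp : IntegrableOn (fun t : ℝ => Real.exp (-(τ/2) * t)) (Set.Ioi 0) :=
    integrableOn_exp_mul_Ioi (by linarith) 0
  have hpt : ∀ t : ℝ, 0 ≤ t → Real.exp (-(t * τ)) * t ^ k
      ≤ (k.factorial * (2 / τ) ^ k) * Real.exp (-(τ/2) * t) := by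
    intro t ht
    have h := pow_mul_exp_le k (t * τ / 2) (by positivity)
    have e1 : Real.exp (-(t * τ)) = Real.exp (-(t*τ/2)) * Real.exp (-(τ/2) * t) := by
      rw [← Real.exp_add]; congr 1; ring
    have e2 : t ^ k = (t * τ / 2) ^ k * (2/τ)^k := by
      rw [← mul_pow]; congr 1; field_simp
    rw [e1, e2]
    calc _ = ((t * τ / 2) ^ k * Real.exp (-(t*τ/2))) * ((2/τ)^k * Real.exp (-(τ/2) * t)) := by ring
      _ ≤ k.factorial * ((2/τ)^k * Real.exp (-(τ/2) * t)) := by gcongr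
      _ = _ := by ring
  have hint : IntegrableOn (fun t : ℝ => Real.exp (-(t * τ)) * t ^ k) (Set.Ioi 0) := by
    refine Integrable.mono' (hexp.const_mul (k.factorial * (2 / τ) ^ k)) (by fun_prop) ?_
    refine (ae_restrict_iff' measurableSet_Ioi).2 (Filter.Eventually.of_forall fun t ht => ?_)
    have ht : (0:ℝ) < t := ht
    rw [Real.norm_of_nonneg (by positivity)]
    exact hpt t ht.le
  have hsub : Set.Ioi b ⊆ Set.Ioi (0:ℝ) := Set.Ioi_subset_Ioi hb.le
  have hsplit := intervalIntegral.integral_interval_add_Ioi hint (hint.mono_set hsub)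
  rw [hfull] at hsplit
  rw [← hsplit, sub_add_cancel_left, abs_neg, abs_of_nonneg]
  · calc _ ≤ ∫ t in Set.Ioi b, (k.factorial * (2 / τ) ^ k) * Real.exp (-(τ/2) * t) := by
          refine setIntegral_mono_on (hint.mono_set hsub) ((hexp.mono_set hsub).const_mul _)
            measurableSet_Ioi fun t ht => hpt t (hb.le.trans (le_of_lt ht))
      _ = (k.factorial * (2 / τ) ^ k) * (Real.exp (-(b * τ / 2)) * (2 / τ)) := by
          rw [integral_const_mul, integral_exp_mul_Ioi (by linarith)]
          congr 1
          rw [show -(τ/2) * b = -(b * τ/2) by ring]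
          field_simp
      _ ≤ (k.factorial * (2 / τ) ^ k) * (Real.exp (-(b * τ / 2)) * 2) := by
          gcongr
          exact div_le_self (by norm_num) hτ
      _ = _ := by ring
  · refine setIntegral_nonneg measurableSet_Ioi fun t ht => ?_
    have : 0 < t := hb.trans ht
    positivity

theorem stmt_1 (q : ℝ → ℂ) (hq : ContinuousOn q (Set.Icc 0 1))
    (a M : ℝ) (ha : 0 < a) (hM : 0 < M) (ak : ℕ → ℂ)
    (hak : ∀ k : ℕ, ‖ak k‖ ≤ M * (2 * a) ^ (-(k : ℤ)))
    (hsum : ∀ t ∈ Set.Icc (0:ℝ) (2 * a),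
      HasSum (fun k : ℕ => ak k * (t : ℂ) ^ k) (q t)) :
    ∃ C > (0:ℝ), ∃ Ct > (0:ℝ),
      (∀ k : ℕ, ‖(k.factorial : ℂ) * ak k‖ ≤ Ct ^ (k + 1) * (k : ℝ) ^ k) ∧
      ∀ τ : ℝ, 1 ≤ τ →
        ‖(∫ t in (0:ℝ)..1, Complex.exp (-((t : ℂ) * (τ : ℂ))) * q t) -
            ∑ k ∈ Finset.range (⌊τ / C⌋₊ + 1),
              ((k.factorial : ℂ) * ak k) * (τ : ℂ) ^ (-((k : ℤ) + 1))‖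
          ≤ Ct * Real.exp (-τ / Ct) := by
  obtain ⟨K, hK⟩ := isCompact_Icc.exists_bound_of_continuousOn hq
  have hK0 : 0 ≤ K := (norm_nonneg _).trans (hK 0 (by simp))
  set b := min a 1 with hbdef
  have hb : 0 < b := lt_min ha one_pos
  have hba : b ≤ a := min_le_left _ _
  have hb1 : b ≤ 1 := min_le_right _ _
  have hl2 : 0 < Real.log 2 := Real.log_pos (by norm_num)
  have hak' : ∀ k : ℕ, ‖ak k‖ ≤ M * (1 / (2 * a)) ^ k := by
    intro k
    have := hak k
    rwa [zpow_neg, zpow_natCast, ← inv_pow, ← one_div] at this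
  have p1 : 0 < 1 / (2*a) := by positivity
  have p2 : 0 < 2 / b := by positivity
  have p3 : 0 < (2/a) / Real.log 2 := by positivity
  set Ct := K + 6 * M + 1 / (2*a) + 2 / b + (2/a) / Real.log 2 with hCt
  have hCt0 : 0 < Ct := by positivity
  refine ⟨2 / a, by positivity, Ct, hCt0, ?_, ?_⟩
  · intro k
    rw [norm_mul, Complex.norm_natCast]
    have h1 : (k.factorial : ℝ) ≤ (k:ℝ)^k := by exact_mod_cast k.factorial_le_pow
    calc _ ≤ (k:ℝ)^k * (M * (1 / (2 * a)) ^ k) := by gcongr; exact hak' k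
      _ ≤ (k:ℝ)^k * (Ct * Ct ^ k) := by
        gcongr
        · linarith
        · linarith
      _ = _ := by ring
  intro τ hτ
  have hτ0 : 0 < τ := by linarith
  set N := ⌊τ / (2/a)⌋₊ with hN
  have hNle : (N:ℝ) ≤ τ / (2/a) := Nat.floor_le (by positivity)
  have hNlt : τ / (2/a) < (N:ℝ) + 1 := Nat.lt_floor_add_one _
  set E := Real.exp (-τ / Ct) with hE
  have hmono : ∀ x : ℝ, 0 < x → x ≤ Ct → ∀ y, y = -τ / x → Real.exp y ≤ E := by
    intro x hx hxC y hy
    rw [hy, hE]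
    apply Real.exp_le_exp.2
    rw [neg_div, neg_div]
    apply neg_le_neg
    gcongr
  have hE1 : Real.exp (-(b * τ / 2)) ≤ E :=
    hmono (2/b) p2 (by linarith) _ (by field_simp)
  have hE2 : (1/2:ℝ)^(N+1) ≤ E := by
    refine le_trans ?_ (hmono ((2/a)/Real.log 2) p3 (by linarith) _ rfl)
    have : (1/2:ℝ)^(N+1) = Real.exp (-(Real.log 2 * ((N:ℝ)+1))) := by
      rw [← Real.log_exp (Real.log 2 * ((N:ℝ)+1)), Real.log_exp, Real.exp_neg]
      have : Real.log 2 * ((N:ℝ)+1) = ((N+1:ℕ):ℝ) * Real.log 2 := by push_cast; ring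
      rw [this, Real.exp_nat_mul, Real.exp_log (by norm_num), one_div, inv_pow]
    rw [this]
    apply Real.exp_le_exp.2
    have e : -τ / (2 / a / Real.log 2) = - (Real.log 2 * (τ / (2/a))) := by field_simp
    rw [e]
    gcongr
  have hnexp : ∀ t : ℝ, ‖Complex.exp (-((t : ℂ) * (τ : ℂ)))‖ = Real.exp (-(t * τ)) := by
    intro t; rw [Complex.norm_exp]; simp
  -- integrability
  have hcont : ContinuousOn (fun t : ℝ => Complex.exp (-((t : ℂ) * (τ : ℂ))) * q t)
      (Set.Icc 0 1) := by
    refine ContinuousOn.mul ?_ hq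
    fun_prop
  have i1 : IntervalIntegrable (fun t : ℝ => Complex.exp (-((t : ℂ) * (τ : ℂ))) * q t)
      volume 0 b := by
    apply ContinuousOn.intervalIntegrable
    rw [Set.uIcc_of_le hb.le]
    exact hcont.mono (Set.Icc_subset_Icc le_rfl hb1)
  have i2 : IntervalIntegrable (fun t : ℝ => Complex.exp (-((t : ℂ) * (τ : ℂ))) * q t)
      volume b 1 := by
    apply ContinuousOn.intervalIntegrable
    rw [Set.uIcc_of_le hb1]
    exact hcont.mono (Set.Icc_subset_Icc hb.le le_rfl)
  have iS : ∀ k : ℕ, IntervalIntegrable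
      (fun t : ℝ => ak k * (Complex.exp (-((t : ℂ) * (τ : ℂ))) * (t:ℂ) ^ k)) volume 0 b := by
    intro k
    apply Continuous.intervalIntegrable
    fun_prop
  -- far part
  have A : ‖∫ t in b..1, Complex.exp (-((t : ℂ) * (τ : ℂ))) * q t‖ ≤ K * E := by
    have : ‖∫ t in b..1, Complex.exp (-((t : ℂ) * (τ : ℂ))) * q t‖ ≤ (E * K) * |1 - b| := by
      apply intervalIntegral.norm_integral_le_of_norm_le_const
      intro t ht
      rw [Set.uIoc_of_le hb1] at ht
      rw [norm_mul, hnexp]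
      gcongr
      · refine le_trans (Real.exp_le_exp.2 ?_) hE1
        have : b * τ ≤ t * τ := by gcongr; exact ht.1.le
        have : 0 < b * τ := by positivity
        linarith
      · exact hK t ⟨hb.le.trans ht.1.le, ht.2⟩
    refine this.trans ?_
    have h1 : |1 - b| ≤ 1 := by rw [abs_of_nonneg (by linarith)]; linarith
    calc _ ≤ (E * K) * 1 := by gcongr
      _ = _ := by ring
  -- remainder
  have hR : ∀ t ∈ Set.Icc (0:ℝ) b,
      ‖q t - ∑ k ∈ Finset.range (N+1), ak k * (t:ℂ)^k‖ ≤ 2 * M * (1/2:ℝ)^(N+1) := by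
    intro t ht
    have h := hsum t ⟨ht.1, by linarith [ht.2]⟩
    have h2 := (hasSum_nat_add_iff' (N+1)).2 h
    have hg : HasSum (fun k : ℕ => M * (1/2:ℝ)^(N+1) * (1/2:ℝ)^k)
        (M * (1/2:ℝ)^(N+1) * 2) := hasSum_geometric_two.mul_left _
    have hle : ∀ k : ℕ, ‖ak (k+(N+1)) * (t:ℂ)^(k+(N+1))‖ ≤ M * (1/2:ℝ)^(N+1) * (1/2:ℝ)^k := by
      intro k
      rw [norm_mul, norm_pow, Complex.norm_real, Real.norm_of_nonneg ht.1]
      calc _ ≤ M * (1 / (2 * a)) ^ (k+(N+1)) * a ^ (k+(N+1)) := by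
            have h0 := ht.1
            gcongr
            · exact hak' _
            · exact ht.2.trans hba
        _ = M * (1/2:ℝ)^(k+(N+1)) := by
            rw [mul_assoc, ← mul_pow]; congr 2; field_simp
        _ = _ := by ring
    have := tsum_of_norm_bounded hg hle
    rw [h2.tsum_eq] at this
    linarith
  have B : ‖∫ t in (0:ℝ)..b, (Complex.exp (-((t : ℂ) * (τ : ℂ))) * q t
      - ∑ k ∈ Finset.range (N+1), ak k * (Complex.exp (-((t : ℂ) * (τ : ℂ))) * (t:ℂ)^k))‖
      ≤ 2 * M * E := by
    have : ‖∫ t in (0:ℝ)..b, (Complex.exp (-((t : ℂ) * (τ : ℂ))) * q t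
      - ∑ k ∈ Finset.range (N+1), ak k * (Complex.exp (-((t : ℂ) * (τ : ℂ))) * (t:ℂ)^k))‖
      ≤ (2 * M * E) * |b - 0| := by
      apply intervalIntegral.norm_integral_le_of_norm_le_const
      intro t ht
      rw [Set.uIoc_of_le hb.le] at ht
      have e : Complex.exp (-((t : ℂ) * (τ : ℂ))) * q t
        - ∑ k ∈ Finset.range (N+1), ak k * (Complex.exp (-((t : ℂ) * (τ : ℂ))) * (t:ℂ)^k)
        = Complex.exp (-((t : ℂ) * (τ : ℂ))) *
          (q t - ∑ k ∈ Finset.range (N+1), ak k * (t:ℂ)^k) := by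
        rw [mul_sub, Finset.mul_sum]
        congr 1
        refine Finset.sum_congr rfl fun k _ => by ring
      rw [e, norm_mul, hnexp]
      have h0 : 0 < t := ht.1
      have h1 : Real.exp (-(t * τ)) ≤ 1 := Real.exp_le_one_iff.2 (by
        have : 0 < t * τ := by positivity
        linarith)
      have h2 := hR t ⟨ht.1.le, ht.2⟩
      calc _ ≤ 1 * (2 * M * (1/2:ℝ)^(N+1)) := by gcongr
        _ ≤ _ := by rw [one_mul]; gcongr
    refine this.trans ?_
    have h1 : |b - 0| ≤ 1 := by rw [sub_zero, abs_of_nonneg hb.le]; exact hb1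
    calc _ ≤ (2 * M * E) * 1 := by gcongr
      _ = _ := by ring
  -- polynomial part
  have D : ∀ k ∈ Finset.range (N+1),
      ‖(∫ t in (0:ℝ)..b, ak k * (Complex.exp (-((t : ℂ) * (τ : ℂ))) * (t:ℂ)^k))
        - ((k.factorial : ℂ) * ak k) * (τ : ℂ) ^ (-((k : ℤ) + 1))‖
      ≤ 2 * M * E * (1/2:ℝ)^k := by
    intro k hk
    have hkN : (k:ℝ) ≤ N := by exact_mod_cast Nat.lt_succ_iff.1 (Finset.mem_range.1 hk)
    have e1 : (∫ t in (0:ℝ)..b, ak k * (Complex.exp (-((t : ℂ) * (τ : ℂ))) * (t:ℂ)^k))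
        = ak k * ((∫ t in (0:ℝ)..b, Real.exp (-(t * τ)) * t ^ k : ℝ) : ℂ) := by
      rw [intervalIntegral.integral_const_mul, ← intervalIntegral.integral_ofReal]
      push_cast
      rfl
    have e2 : ((k.factorial : ℂ) * ak k) * (τ : ℂ) ^ (-((k : ℤ) + 1))
        = ak k * ((k.factorial * (τ ^ (k+1))⁻¹ : ℝ) : ℂ) := by
      rw [zpow_neg, show ((k:ℤ)+1) = ((k+1:ℕ):ℤ) by push_cast; rfl, zpow_natCast]
      push_cast
      ring
    rw [e1, e2, ← mul_sub, norm_mul, ← Complex.ofReal_sub, Complex.norm_real, Real.norm_eq_abs]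
    have h1 := tail_bound k b τ hb hτ
    have h2 : (k.factorial : ℝ) ≤ (τ / (2/a))^k := by
      have h1 : (k.factorial : ℝ) ≤ (k:ℝ)^k := by exact_mod_cast k.factorial_le_pow
      refine h1.trans ?_
      gcongr
      exact hkN.trans hNle
    calc _ ≤ (M * (1 / (2 * a)) ^ k) * (2 * ((τ / (2/a))^k * (2 / τ) ^ k) * E) := by
          gcongr
          · exact hak' k
          · refine h1.trans ?_
            gcongr
      _ = 2 * M * E * ((1 / (2*a)) * ((τ / (2/a)) * (2/τ)))^k := by
          rw [mul_pow, mul_pow]; ring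
      _ = _ := by congr 2; field_simp
  have Dsum : ‖∑ k ∈ Finset.range (N+1),
      ((∫ t in (0:ℝ)..b, ak k * (Complex.exp (-((t : ℂ) * (τ : ℂ))) * (t:ℂ)^k))
        - ((k.factorial : ℂ) * ak k) * (τ : ℂ) ^ (-((k : ℤ) + 1)))‖ ≤ 4 * M * E := by
    refine (norm_sum_le_of_le _ D).trans ?_
    rw [← Finset.mul_sum]
    have : ∑ k ∈ Finset.range (N+1), (1/2:ℝ)^k ≤ 2 := sum_geometric_two_le _
    calc _ ≤ 2 * M * E * 2 := by gcongr
      _ = _ := by ring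
  have hsub := intervalIntegral.integral_sub i1 (IntervalIntegrable.sum (Finset.range (N+1)) (fun k _ => iS k))
  rw [Finset.sum_fn] at hsub
  rw [intervalIntegral.integral_finsetSum (fun k _ => iS k)] at hsub
  rw [hsub] at B
  rw [Finset.sum_sub_distrib] at Dsum
  rw [← intervalIntegral.integral_add_adjacent_intervals i1 i2]
  have hfin : K * E + 2 * M * E + 4 * M * E ≤ Ct * E := by
    have : (K + 6 * M) * E ≤ Ct * E := by
      gcongr
      linarith
    linarith
  refine le_trans ?_ hfin
  refine le_trans ?_ (add_le_add (add_le_add A B) Dsum)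
  refine le_trans (le_of_eq ?_) (norm_add₃_le)
  congr 1
  ring
end

section
/- Let f(x) = x + x·ln(1/x) for 0 < x ≤ 1, with f(0) := 0. For every natural number k, every real λ > 0, and every θ₀ with 0 < θ₀ < 1, if k ≤ θ₀ λ then ∫_λ^∞ e^{−s} (s^k / k!) ds ≤ e^{−λ(1 − f(θ₀))} / (1 − θ₀). -/
open MeasureTheory

/-- With `f(x) = x + x·ln(1/x)` (and `f(0) = 0`, which the formula
gives automatically since `Real.log 0 = 0`), for every `k ∈ ℕ`, `λ > 0`, `0 < θ₀ < 1`
with `k ≤ θ₀ λ`, one has `∫_λ^∞ e^{-s} s^k/k! ds ≤ e^{-λ(1 - f(θ₀))} / (1 - θ₀)`. -/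
theorem stmt_3 (f : ℝ → ℝ) (hf : ∀ x : ℝ, f x = x + x * Real.log (1 / x))
    (k : ℕ) (lam : ℝ) (hlam : 0 < lam) (θ₀ : ℝ) (h0 : 0 < θ₀) (h1 : θ₀ < 1)
    (hk : (k : ℝ) ≤ θ₀ * lam) :
    (∫ s in Set.Ioi lam, Real.exp (-s) * s ^ k / (k.factorial : ℝ))
      ≤ Real.exp (-(lam * (1 - f θ₀))) / (1 - θ₀) := by
  have hlog : Real.log (1 / θ₀) = -Real.log θ₀ := by rw [one_div, Real.log_inv]
  have hlneg : Real.log θ₀ < 0 := Real.log_neg h0 h1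
  have ha : θ₀ - 1 < 0 := by linarith
  set C : ℝ := Real.exp (θ₀ * lam * Real.log (1 / θ₀)) with hC
  have hCk : (1 / θ₀) ^ k ≤ C := by
    have h : (1 / θ₀) ^ k = Real.exp (k * Real.log (1 / θ₀)) := by
      rw [Real.exp_nat_mul, Real.exp_log (by positivity)]
    rw [h, hC]
    apply Real.exp_le_exp.mpr
    apply mul_le_mul_of_nonneg_right hk
    rw [hlog]; linarith
  have hpt : ∀ s ∈ Set.Ioi lam, Real.exp (-s) * s ^ k / (k.factorial : ℝ)
      ≤ C * Real.exp ((θ₀ - 1) * s) := by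
    intro s hs
    have hs0 : 0 < s := lt_trans hlam hs
    have h := Real.pow_div_factorial_le_exp (θ₀ * s) (by positivity) k
    have e1 : Real.exp (-s) * s ^ k / (k.factorial : ℝ)
        = Real.exp (-s) * ((1 / θ₀) ^ k * ((θ₀ * s) ^ k / (k.factorial : ℝ))) := by
      rw [mul_pow, one_div, inv_pow]
      field_simp
    have e2 : C * Real.exp ((θ₀ - 1) * s) = Real.exp (-s) * (C * Real.exp (θ₀ * s)) := by
      rw [show (θ₀ - 1) * s = -s + θ₀ * s by ring, Real.exp_add]; ring
    rw [e1, e2]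
    gcongr
  have hint : IntegrableOn (fun s => C * Real.exp ((θ₀ - 1) * s)) (Set.Ioi lam) :=
    (integrableOn_exp_mul_Ioi ha lam).const_mul C
  calc (∫ s in Set.Ioi lam, Real.exp (-s) * s ^ k / (k.factorial : ℝ))
      ≤ ∫ s in Set.Ioi lam, C * Real.exp ((θ₀ - 1) * s) := by
        apply integral_mono_of_nonneg _ hint
        · exact (ae_restrict_iff' measurableSet_Ioi).mpr (Filter.Eventually.of_forall hpt)
        · refine (ae_restrict_iff' measurableSet_Ioi).mpr (Filter.Eventually.of_forall ?_)
          intro s hs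
          have hs0 : 0 < s := lt_trans hlam hs
          simp only [Pi.zero_apply]
          positivity
    _ = Real.exp (-(lam * (1 - f θ₀))) / (1 - θ₀) := by
        rw [integral_const_mul, integral_exp_mul_Ioi ha, hf,
          show -(lam * (1 - (θ₀ + θ₀ * Real.log (1 / θ₀))))
            = θ₀ * lam * Real.log (1 / θ₀) + (θ₀ - 1) * lam by ring, Real.exp_add, ← hC,
          show θ₀ - 1 = -(1 - θ₀) by ring, neg_div_neg_eq, mul_div_assoc]
end

section
/- Let f(x) = x + x·ln(1/x) for 0 < x ≤ 1, with f(0) := 0. For every θ₀ with 0 < θ₀ < 1, every a > 0, every τ > 0, and every natural number k with k ≤ θ₀ a τ, one has | (τ^{k+1}/k!) ∫_0^a e^{−tτ} t^k dt − 1 | ≤ e^{−aτ(1 − f(θ₀))} / (1 − θ₀). -/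
open MeasureTheory

theorem aux_deriv (τ t : ℝ) (k : ℕ) :
    HasDerivAt (fun t : ℝ => -(Real.exp (-(t * τ)) *
      ∑ j ∈ Finset.range (k + 1), (t * τ) ^ j / (j.factorial : ℝ)))
      (τ ^ (k + 1) / (k.factorial : ℝ) * (Real.exp (-(t * τ)) * t ^ k)) t := by
  have hx : HasDerivAt (fun t : ℝ => t * τ) τ t := by
    simpa using (hasDerivAt_id t).mul_const τ
  have he : HasDerivAt (fun t : ℝ => Real.exp (-(t * τ))) (Real.exp (-(t * τ)) * (-τ)) t :=
    hx.neg.exp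
  induction k with
  | zero =>
    have := he.neg
    refine (this.congr_deriv (by simp; ring)).congr_of_eventuallyEq (Filter.Eventually.of_forall fun s => ?_)
    simp
  | succ k ih =>
    have h2 := (he.mul ((hx.pow (k + 1)).div_const (((k + 1).factorial : ℕ) : ℝ)))
    have := ih.sub h2
    refine (this.congr_deriv ?_).congr_of_eventuallyEq (Filter.Eventually.of_forall fun s => ?_)
    · have hk : (k.factorial : ℝ) ≠ 0 := by positivity
      have hk1 : (k : ℝ) + 1 ≠ 0 := by positivity
      simp only [Nat.factorial_succ, Pi.pow_apply]
      push_cast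
      field_simp
      ring
    · simp only [Pi.sub_apply, Pi.mul_apply, Pi.pow_apply]
      rw [Finset.sum_range_succ _ (k + 1)]; ring

theorem stmt_4 (f : ℝ → ℝ) (hf : ∀ x : ℝ, f x = x + x * Real.log (1 / x))
    (θ₀ a τ : ℝ) (h0 : 0 < θ₀) (h1 : θ₀ < 1) (ha : 0 < a) (hτ : 0 < τ)
    (k : ℕ) (hk : (k : ℝ) ≤ θ₀ * (a * τ)) :
    |τ ^ (k + 1) / (k.factorial : ℝ) * (∫ t in (0:ℝ)..a, Real.exp (-(t * τ)) * t ^ k) - 1|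
      ≤ Real.exp (-(a * τ) * (1 - f θ₀)) / (1 - θ₀) := by
  have hI : τ ^ (k + 1) / (k.factorial : ℝ) * (∫ t in (0:ℝ)..a, Real.exp (-(t * τ)) * t ^ k) - 1
      = -(Real.exp (-(a * τ)) *
      ∑ j ∈ Finset.range (k + 1), (a * τ) ^ j / (j.factorial : ℝ)) := by
    rw [← intervalIntegral.integral_const_mul,
      intervalIntegral.integral_eq_sub_of_hasDerivAt (fun t _ => aux_deriv τ t k)
        (Continuous.intervalIntegrable (by fun_prop) _ _)]
    have : ∑ j ∈ Finset.range (k + 1), ((0:ℝ) * τ) ^ j / (j.factorial : ℝ) = 1 := by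
      rw [Finset.sum_range_succ']; simp
    rw [this]; simp
  have hx : 0 < a * τ := mul_pos ha hτ
  rw [hI, abs_neg, abs_of_nonneg (by positivity)]
  generalize a * τ = x at *
  have hS : ∑ j ∈ Finset.range (k + 1), x ^ j / (j.factorial : ℝ)
      ≤ Real.exp (x * f θ₀) := by
    have hlog : 0 ≤ Real.log (1 / θ₀) := Real.log_nonneg (by rw [le_div_iff₀ h0]; linarith)
    calc _ ≤ ∑ j ∈ Finset.range (k + 1),
          Real.exp (θ₀ * x * Real.log (1 / θ₀)) * ((θ₀ * x) ^ j / (j.factorial : ℝ)) := by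
          refine Finset.sum_le_sum fun j hj => ?_
          have hjk : (j : ℝ) ≤ θ₀ * x := by
            have : j ≤ k := by simpa [Nat.lt_succ_iff] using hj
            exact le_trans (by exact_mod_cast this) hk
          have h3 : (1 / θ₀) ^ j ≤ Real.exp (θ₀ * x * Real.log (1 / θ₀)) := by
            rw [← Real.exp_log (show 0 < (1 / θ₀) ^ j by positivity), Real.log_pow]
            exact Real.exp_le_exp.2 (mul_le_mul_of_nonneg_right hjk hlog)
          have h4 : x ^ j / (j.factorial : ℝ)
              = (1 / θ₀) ^ j * ((θ₀ * x) ^ j / (j.factorial : ℝ)) := by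
            rw [← mul_div_assoc, ← mul_pow]; congr 2; field_simp
          rw [h4]
          exact mul_le_mul_of_nonneg_right h3 (by positivity)
      _ ≤ Real.exp (θ₀ * x * Real.log (1 / θ₀)) * Real.exp (θ₀ * x) := by
          rw [← Finset.mul_sum]
          exact mul_le_mul_of_nonneg_left (Real.sum_le_exp_of_nonneg (by positivity) _)
            (Real.exp_pos _).le
      _ = _ := by rw [← Real.exp_add, hf]; congr 1; ring
  calc _ ≤ Real.exp (-x) * Real.exp (x * f θ₀) :=
        mul_le_mul_of_nonneg_left hS (Real.exp_pos _).le
    _ = Real.exp (-x * (1 - f θ₀)) := by rw [← Real.exp_add]; congr 1; ring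
    _ ≤ _ := by
      rw [le_div_iff₀ (by linarith)]
      nlinarith [Real.exp_pos (-x * (1 - f θ₀))]
end

section
/- Let C̃ > 0 and let F be a bounded continuous function on the closed right half-plane {τ ∈ ℂ : Re τ ≥ 0} that is holomorphic on the open right half-plane {Re τ > 0}. If |F(τ)| ≤ e^{−τ/C̃} for all real τ > 0, then there exists a constant M > 0 such that |F(τ)| ≤ M e^{−Re τ / C̃} for all τ with Re τ ≥ 0. -/
/-- Phragmén–Lindelöf. Let `F` be bounded and continuous on the
closed right half-plane, holomorphic on the open right half-plane, with
`|F(τ)| ≤ e^{-τ/C̃}` for all real `τ > 0`. Then there is `M > 0` with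
`|F(τ)| ≤ M e^{-Re τ / C̃}` on the whole closed right half-plane. -/
theorem stmt_5 (Ct : ℝ) (hCt : 0 < Ct) (F : ℂ → ℂ) (B : ℝ)
    (hFb : ∀ τ : ℂ, 0 ≤ τ.re → ‖F τ‖ ≤ B)
    (hFc : ContinuousOn F {τ : ℂ | 0 ≤ τ.re})
    (hFh : DifferentiableOn ℂ F {τ : ℂ | 0 < τ.re})
    (hdec : ∀ τ : ℝ, 0 < τ → ‖F (τ : ℂ)‖ ≤ Real.exp (-τ / Ct)) :
    ∃ M > (0:ℝ), ∀ τ : ℂ, 0 ≤ τ.re → ‖F τ‖ ≤ M * Real.exp (-τ.re / Ct) := by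
  have hd : DiffContOnCl ℂ (fun z : ℂ => Complex.exp (z / Ct) * F z) {z : ℂ | 0 < z.re} := by
    refine ⟨?_, ?_⟩
    · exact DifferentiableOn.mul (by fun_prop) hFh
    · rw [Complex.closure_setOfPred_lt_re]
      exact ContinuousOn.mul (by fun_prop) hFc
  have hn : ∀ z : ℂ, ‖Complex.exp (z / Ct) * F z‖ = Real.exp (z.re / Ct) * ‖F z‖ := by
    intro z
    rw [norm_mul, Complex.norm_exp, Complex.div_ofReal_re]
  have hB : 0 ≤ B := (norm_nonneg _).trans (hFb 0 (by simp))
  have key : ∀ z : ℂ, 0 ≤ z.re → ‖Complex.exp (z / Ct) * F z‖ ≤ B + 1 := by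
    intro z hz
    refine PhragmenLindelof.right_half_plane_of_bounded_on_real
      (f := fun z : ℂ => Complex.exp (z / Ct) * F z) hd
      ⟨1, by norm_num, 1 / Ct, ?_⟩ ?_ ?_ hz
    · refine Asymptotics.IsBigO.of_bound B ?_
      refine Filter.mem_inf_of_right ?_
      intro w hw
      have hw' : 0 < w.re := hw
      show ‖Complex.exp (w / Ct) * F w‖ ≤ _
      rw [hn, Real.norm_eq_abs, Real.abs_exp, mul_comm, Real.rpow_one]
      refine mul_le_mul (hFb w hw'.le) ?_ (Real.exp_pos _).le hB
      rw [Real.exp_le_exp, div_mul_eq_mul_div, one_mul]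
      exact div_le_div_of_nonneg_right (Complex.re_le_norm w) hCt.le
    · refine Filter.isBoundedUnder_of_eventually_le (a := 1) ?_
      filter_upwards [Filter.eventually_gt_atTop (0:ℝ)] with x hx
      rw [hn, Complex.ofReal_re]
      calc _ ≤ Real.exp (x / Ct) * Real.exp (-x / Ct) :=
            mul_le_mul_of_nonneg_left (hdec x hx) (Real.exp_pos _).le
        _ ≤ 1 := by rw [← Real.exp_add, neg_div, add_neg_cancel, Real.exp_zero]
    · intro x
      rw [hn]
      have h := hFb (x * Complex.I) (by simp)
      simp only [Complex.re_ofReal_mul, Complex.I_re, mul_zero, zero_div, Real.exp_zero, one_mul]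
      linarith
  refine ⟨B + 1, by linarith, fun τ hτ => ?_⟩
  have h := key τ hτ
  rw [hn] at h
  rw [neg_div, Real.exp_neg, ← div_eq_mul_inv, le_div_iff₀ (Real.exp_pos _), mul_comm]
  exact h
end

section
/- Let q̃ ∈ L^∞(ℝ, ℂ) be a bounded measurable function with support contained in [0,1], and let Lq̃(τ) = ∫_0^1 e^{−tτ} q̃(t) dt be its Laplace transform (an entire function of τ). Suppose there exist constants M, C̃ > 0 such that |Lq̃(τ)| ≤ M e^{−Re τ / C̃} for all τ ∈ ℂ with Re τ ≥ 0. Then q̃(t) = 0 for almost every t ∈ [0, 1/C̃); that is, the support of q̃ is contained in [1/C̃, 1]. -/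
open MeasureTheory

section
open scoped FourierTransform SchwartzMap

theorem aux_inj (f : ℝ → ℂ) (hf : Integrable f) (h0 : ∀ w, 𝓕 f w = 0) : ∀ᵐ t, f t = 0 := by
  apply ae_eq_zero_of_integral_contDiff_smul_eq_zero hf.locallyIntegrable
  intro g hg hgc
  have h1 : ContDiff ℝ (↑(⊤ : ℕ∞)) (fun x => (g x : ℂ)) := Complex.ofRealCLM.contDiff.comp hg
  have h2 : HasCompactSupport (fun x => (g x : ℂ)) := hgc.comp_left (g := Complex.ofReal) (by simp)
  let G : 𝓢(ℝ, ℂ) := h2.toSchwartzMap h1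
  let H : 𝓢(ℝ, ℂ) := 𝓕⁻ G
  have hH : 𝓕 (H : ℝ → ℂ) = G := by
    rw [← SchwartzMap.fourier_coe]; simp [H]
  have := VectorFourier.integral_fourierIntegral_smul_eq_flip (L := innerₗ ℝ) (μ := volume) (ν := volume)
    Real.continuous_fourierChar continuous_inner (H.integrable (μ := volume)) hf
  have hz : VectorFourier.fourierIntegral Real.fourierChar volume (innerₗ ℝ).flip f = 0 := by
    rw [flip_innerₗ]; ext w; exact h0 w
  have e : VectorFourier.fourierIntegral Real.fourierChar volume (innerₗ ℝ) (H : ℝ → ℂ) = G := hH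
  rw [hz, e] at this
  simpa [G] using this

theorem aux_diff (b : ℝ) (f : ℝ → ℂ) (hf : Integrable f) (hs : ∀ t, t ∉ Set.Ioc 0 b → f t = 0) :
    Differentiable ℂ (fun τ : ℂ => ∫ t : ℝ, Complex.exp (((b - t : ℝ) : ℂ) * τ) * f t) := by
  intro τ
  have hm : ∀ τ : ℂ, AEStronglyMeasurable (fun t : ℝ => Complex.exp (((b - t : ℝ) : ℂ) * τ) * f t) := 
    fun τ => (Continuous.aestronglyMeasurable (by fun_prop)).mul hf.1
  have hbd : ∀ (t : ℝ) (x : ℂ), ‖Complex.exp (((b - t : ℝ) : ℂ) * x) * f t‖ ≤ Real.exp (b * ‖x‖) * ‖f t‖ := by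
    intro t x
    by_cases ht : t ∈ Set.Ioc 0 b
    · rw [norm_mul, Complex.norm_exp]
      gcongr
      rw [Complex.re_ofReal_mul]
      have h1 := Complex.re_le_norm x
      have := norm_nonneg x
      have h3 : 0 ≤ b - t := by linarith [ht.2]
      nlinarith [ht.1, mul_le_mul_of_nonneg_left h1 h3]
    · simp [hs t ht]
  refine (hasDerivAt_integral_of_dominated_loc_of_deriv_le (s := Metric.ball τ 1)
    (bound := fun t => b * (Real.exp (b * (‖τ‖ + 1)) * ‖f t‖))
    (F' := fun x t => ((b - t : ℝ) : ℂ) * (Complex.exp (((b - t : ℝ) : ℂ) * x) * f t))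
    (Metric.ball_mem_nhds _ one_pos) (.of_forall hm) ?_ ?_ ?_ ?_ ?_).2.differentiableAt
  · exact (hf.norm.const_mul (Real.exp (b * ‖τ‖))).mono' (hm τ) (.of_forall fun t => hbd t τ)
  · exact (Continuous.aestronglyMeasurable (by fun_prop)).mul (hm τ)
  · refine .of_forall fun t x hx => ?_
    by_cases ht : t ∈ Set.Ioc 0 b
    · have hb : 0 < b := ht.1.trans_le ht.2
      rw [norm_mul]
      have h1 : ‖((b - t : ℝ) : ℂ)‖ ≤ b := by
        rw [Complex.norm_real, Real.norm_eq_abs, abs_of_nonneg] <;> linarith [ht.1, ht.2]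
      have h2 : ‖x‖ ≤ ‖τ‖ + 1 := by
        have := norm_sub_norm_le x τ
        rw [Metric.mem_ball, dist_eq_norm] at hx
        linarith
      refine mul_le_mul h1 ((hbd t x).trans ?_) (norm_nonneg _) hb.le
      gcongr
    · simp [hs t ht]
  · exact (hf.norm.const_mul _).const_mul _
  · refine .of_forall fun t x hx => ?_
    have := (((hasDerivAt_id x).const_mul ((b - t : ℝ) : ℂ)).cexp).mul_const (f t)
    refine this.congr_deriv ?_
    simp only [id, mul_one]
    ring

theorem aux_main (qt : ℝ → ℂ) (hmeas : Measurable qt) (M₀ : ℝ)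
    (hbdd : ∀ t : ℝ, ‖qt t‖ ≤ M₀) (b M : ℝ) (hb : 0 < b) (hb1 : b ≤ 1)
    (hdec : ∀ τ : ℂ, 0 ≤ τ.re →
      ‖∫ t in (0:ℝ)..1, Complex.exp (-((t : ℂ) * τ)) * qt t‖ ≤ M * Real.exp (-τ.re * b)) :
    ∀ᵐ t, (Set.Ioc 0 b).indicator qt t = 0 := by
  have hM0 : 0 ≤ M₀ := (norm_nonneg _).trans (hbdd 0)
  set f := (Set.Ioc 0 b).indicator qt with hfdef
  have hqi : ∀ c d : ℝ, IntegrableOn qt (Set.Ioc c d) := fun c d =>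
    Measure.integrableOn_of_bounded (M := M₀) (by simp) hmeas.aestronglyMeasurable
      (.of_forall hbdd)
  have hf : Integrable f := (integrable_indicator_iff measurableSet_Ioc).2 (hqi 0 b)
  have hs : ∀ t, t ∉ Set.Ioc 0 b → f t = 0 := fun t ht => Set.indicator_of_notMem ht _
  have hd := aux_diff b f hf hs
  set g : ℂ → ℂ := fun τ : ℂ => ∫ t : ℝ, Complex.exp (((b - t : ℝ) : ℂ) * τ) * f t with hg
  have hgi : ∀ τ, g τ = ∫ t in (0:ℝ)..b, Complex.exp (((b - t : ℝ) : ℂ) * τ) * qt t := by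
    intro τ
    rw [intervalIntegral.integral_of_le hb.le, ← integral_indicator measurableSet_Ioc]
    simp only [hg, hfdef]
    congr 1; ext t
    by_cases ht : t ∈ Set.Ioc 0 b <;> simp [ht]
  have hint : ∀ (τ : ℂ) (c d : ℝ), IntervalIntegrable
      (fun t : ℝ => Complex.exp (((b - t : ℝ) : ℂ) * τ) * qt t) volume c d := by
    intro τ c d
    apply IntervalIntegrable.continuousOn_mul
    · exact ⟨hqi _ _, hqi _ _⟩
    · exact Continuous.continuousOn (by fun_prop)
  have hbound : ∀ τ, ‖g τ‖ ≤ M + M₀ := by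
    intro τ
    have hM : 0 ≤ M := by
      have := (norm_nonneg _).trans (hdec 0 (by simp))
      simpa using this
    rcases le_total 0 τ.re with h | h
    · have h1 := intervalIntegral.integral_add_adjacent_intervals (hint τ 0 b) (hint τ b 1)
      have h2 : ∫ t in (0:ℝ)..1, Complex.exp (((b - t : ℝ) : ℂ) * τ) * qt t
          = Complex.exp (b * τ) * ∫ t in (0:ℝ)..1, Complex.exp (-((t : ℂ) * τ)) * qt t := by
        rw [← intervalIntegral.integral_const_mul]
        congr 1; ext t
        rw [← mul_assoc, ← Complex.exp_add]
        congr 2; push_cast; ring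
      have h3 : ‖∫ t in b..1, Complex.exp (((b - t : ℝ) : ℂ) * τ) * qt t‖ ≤ M₀ * |1 - b| := by
        apply intervalIntegral.norm_integral_le_of_norm_le_const
        intro t ht
        rw [Set.uIoc_of_le hb1] at ht
        rw [norm_mul, Complex.norm_exp, Complex.re_ofReal_mul]
        have : Real.exp ((b - t) * τ.re) ≤ 1 := by
          rw [Real.exp_le_one_iff]; nlinarith [ht.1]
        nlinarith [hbdd t, norm_nonneg (qt t)]
      have h4 : ‖Complex.exp (b * τ) * ∫ t in (0:ℝ)..1, Complex.exp (-((t : ℂ) * τ)) * qt t‖ ≤ M := by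
        rw [norm_mul, Complex.norm_exp, Complex.re_ofReal_mul]
        calc _ ≤ Real.exp (b * τ.re) * (M * Real.exp (-τ.re * b)) := by gcongr; exact hdec τ h
          _ = M * Real.exp (b * τ.re + -τ.re * b) := by rw [Real.exp_add]; ring
          _ = M := by simp [mul_comm]
      rw [abs_of_nonneg (by linarith)] at h3
      have h5 : g τ = (∫ t in (0:ℝ)..1, Complex.exp (((b - t : ℝ) : ℂ) * τ) * qt t) -
          ∫ t in b..1, Complex.exp (((b - t : ℝ) : ℂ) * τ) * qt t := by
        rw [hgi, ← h1]; ring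
      rw [h5, h2]
      refine (norm_sub_le _ _).trans ?_
      nlinarith
    · rw [hgi]
      have h3 : ‖∫ t in (0:ℝ)..b, Complex.exp (((b - t : ℝ) : ℂ) * τ) * qt t‖ ≤ M₀ * |b - 0| := by
        apply intervalIntegral.norm_integral_le_of_norm_le_const
        intro t ht
        rw [Set.uIoc_of_le hb.le] at ht
        rw [norm_mul, Complex.norm_exp, Complex.re_ofReal_mul]
        have : Real.exp ((b - t) * τ.re) ≤ 1 := by
          rw [Real.exp_le_one_iff]; nlinarith [ht.2]
        nlinarith [hbdd t, norm_nonneg (qt t)]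
      rw [sub_zero, abs_of_pos hb] at h3
      nlinarith
  have hconst := hd.apply_eq_apply_of_bounded
    (isBounded_iff_forall_norm_le.2 ⟨M + M₀, by rintro _ ⟨τ, rfl⟩; exact hbound τ⟩)
  have hF : ∀ w : ℝ, ‖𝓕 f w‖ = ‖g 0‖ := by
    intro w
    have : 𝓕 f w = Complex.exp (((-2 * Real.pi * b * w : ℝ) : ℂ) * Complex.I)
        * g (2 * Real.pi * w * Complex.I) := by
      rw [Real.fourier_real_eq_integral_exp_smul]
      simp only [hg]
      rw [← integral_const_mul]
      congr 1; ext t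
      rw [← mul_assoc, ← Complex.exp_add, smul_eq_mul]
      congr 2; push_cast; ring
    rw [this, norm_mul, Complex.norm_exp_ofReal_mul_I, one_mul, hconst _ 0]
  have h0 : ‖g 0‖ = 0 := by
    have := (Real.zero_at_infty_fourier f).norm
    simp only [hF, norm_zero] at this
    exact tendsto_nhds_unique tendsto_const_nhds this
  exact aux_inj f hf fun w => norm_eq_zero.1 ((hF w).trans h0)

end




/-- Paley–Wiener type support statement. Let `q̃ ∈ L^∞(ℝ, ℂ)` be
supported in `[0,1]` and suppose its Laplace transform satisfies
`|Lq̃(τ)| ≤ M e^{-Re τ / C̃}` on the closed right half-plane. Then `q̃ = 0` a.e. on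
`[0, 1/C̃)`, i.e. `supp q̃ ⊆ [1/C̃, 1]`. -/
theorem stmt_6 (qt : ℝ → ℂ) (hmeas : Measurable qt) (M₀ : ℝ)
    (hbdd : ∀ t : ℝ, ‖qt t‖ ≤ M₀)
    (hsupp : ∀ t : ℝ, t ∉ Set.Icc (0:ℝ) 1 → qt t = 0)
    (M Ct : ℝ) (hM : 0 < M) (hCt : 0 < Ct)
    (hdec : ∀ τ : ℂ, 0 ≤ τ.re →
      ‖∫ t in (0:ℝ)..1, Complex.exp (-((t : ℂ) * τ)) * qt t‖ ≤ M * Real.exp (-τ.re / Ct)) :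
    ∀ᵐ t ∂(volume.restrict (Set.Ico (0:ℝ) (1 / Ct))), qt t = 0 := by
  have hpos : 0 < 1 / Ct := by positivity
  have key := aux_main qt hmeas M₀ hbdd (min (1 / Ct) 1) M (lt_min hpos one_pos) (min_le_right _ _)
    (fun τ hτ => (hdec τ hτ).trans (by
      have h1 : τ.re * min (1 / Ct) 1 ≤ τ.re * (1 / Ct) := by gcongr; exact min_le_left _ _
      have h2 : -τ.re / Ct = -(τ.re * (1 / Ct)) := by ring
      have h3 : -τ.re / Ct ≤ -τ.re * min (1 / Ct) 1 := by linarith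
      exact mul_le_mul_of_nonneg_left (Real.exp_le_exp.2 h3) hM.le))
  rw [ae_restrict_iff' measurableSet_Ico]
  have hne : ∀ᵐ t : ℝ, t ≠ 0 := by simp [ae_iff]
  filter_upwards [key, hne] with t ht h0 hI
  by_cases h1 : t ≤ 1
  · rwa [Set.indicator_of_mem] at ht
    exact ⟨lt_of_le_of_ne hI.1 (Ne.symm h0), le_min hI.2.le h1⟩
  · exact hsupp t fun h => h1 h.2
end

section
/- Let q̃ ∈ L^∞(ℝ, ℂ) be a bounded measurable function with support contained in [0,1], and let Lq̃(τ) = ∫_0^1 e^{−tτ} q̃(t) dt. Suppose there is a constant C̃ > 0 such that |Lq̃(τ)| ≤ e^{−τ/C̃} for all real τ > 0. Then q̃ vanishes in a neighborhood of 0: q̃(t) = 0 for almost every t ∈ [0, 1/C̃). -/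
open MeasureTheory

lemma aux_bound_s7 (qt : ℝ → ℂ) (hmeas : Measurable qt) (M₀ : ℝ)
    (hbdd : ∀ t : ℝ, ‖qt t‖ ≤ M₀)
    (Ct : ℝ)
    (hdec : ∀ τ : ℝ, 0 < τ →
      ‖∫ t in (0:ℝ)..1, Complex.exp (-((t : ℂ) * (τ : ℂ))) * qt t‖ ≤ Real.exp (-τ / Ct))
    (x τ : ℝ) (hτ : 0 < τ) :
    ‖∫ t in (0:ℝ)..1, ((Real.exp (-Real.exp (τ * (x - t))) - 1 : ℝ) : ℂ) * qt t‖
      ≤ Real.exp (Real.exp (τ * (x - 1 / Ct))) - 1 := by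
  have hM : 0 ≤ M₀ := (norm_nonneg _).trans (hbdd 0)
  have hexp : ∀ y : ℝ, HasSum (fun n : ℕ => y ^ (n+1) / ((n+1).factorial : ℝ)) (Real.exp y - 1) := by
    intro y
    have h := NormedSpace.expSeries_div_hasSum_exp y
    rw [← Real.exp_eq_exp_ℝ] at h
    have := (hasSum_nat_add_iff' 1).2 h
    simpa using this
  set B : ℝ := Real.exp (τ * |x|) with hB
  have hs : HasSum (fun n : ℕ => ∫ t in (0:ℝ)..1,
      (((-Real.exp (τ * (x - t))) ^ (n+1) / ((n+1).factorial : ℝ) : ℝ) : ℂ) * qt t)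
      (∫ t in (0:ℝ)..1, ((Real.exp (-Real.exp (τ * (x - t))) - 1 : ℝ) : ℂ) * qt t) := by
    apply intervalIntegral.hasSum_integral_of_dominated_convergence
      (fun n _ => B ^ (n+1) / ((n+1).factorial : ℝ) * M₀)
    · intro n
      apply Measurable.aestronglyMeasurable
      fun_prop
    · intro n
      refine Filter.Eventually.of_forall fun t ht => ?_
      rw [Set.uIoc_of_le zero_le_one] at ht
      rw [norm_mul, Complex.norm_real, norm_div, norm_pow, norm_neg, Real.norm_eq_abs, Real.abs_exp,
        Real.norm_natCast]
      gcongr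
      · exact Real.exp_le_exp.2 (by nlinarith [le_abs_self x, ht.1])
      · exact hbdd t
    · refine Filter.Eventually.of_forall fun t ht => ?_
      exact ((hexp B).mul_right M₀).summable
    · simp
    · refine Filter.Eventually.of_forall fun t ht => ?_
      refine HasSum.mul_right _ ?_
      exact_mod_cast hexp (-Real.exp (τ * (x - t)))
  refine hs.norm_le_of_bounded (hexp _) fun n => ?_
  have h1 : ∀ t : ℝ, (((-Real.exp (τ * (x - t))) ^ (n+1) / ((n+1).factorial : ℝ) : ℝ) : ℂ) * qt t
      = (((-Real.exp (τ * x)) ^ (n+1) / ((n+1).factorial : ℝ) : ℝ) : ℂ) *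
        (Complex.exp (-((t : ℂ) * ((((n:ℝ)+1) * τ : ℝ) : ℂ))) * qt t) := by
    intro t
    have : Complex.exp (-((t : ℂ) * ((((n:ℝ)+1) * τ : ℝ) : ℂ)))
        = ((Real.exp (-(τ * t)) ^ (n+1) : ℝ) : ℂ) := by
      rw [← Real.exp_nat_mul]
      push_cast
      congr 1
      ring
    rw [this, ← mul_assoc, ← Complex.ofReal_mul]
    congr 2
    have : Real.exp (τ * (x - t)) = Real.exp (τ * x) * Real.exp (-(τ * t)) := by
      rw [← Real.exp_add]; ring_nf
    rw [this, ← neg_mul, mul_pow]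
    ring
  simp_rw [h1]
  rw [intervalIntegral.integral_const_mul, norm_mul, Complex.norm_real, norm_div, norm_pow, norm_neg,
    Real.norm_eq_abs, Real.abs_exp, Real.norm_natCast]
  have h2 := hdec (((n:ℝ)+1) * τ) (by positivity)
  have h3 : Real.exp (τ * (x - 1 / Ct)) ^ (n+1)
      = Real.exp (τ * x) ^ (n+1) * Real.exp (-(((n:ℝ)+1) * τ) / Ct) := by
    rw [← Real.exp_nat_mul, ← Real.exp_nat_mul, ← Real.exp_add]
    push_cast
    congr 1
    ring
  rw [h3, mul_div_right_comm]
  gcongr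

lemma aux_zero_s7 (qt : ℝ → ℂ) (hmeas : Measurable qt) (M₀ : ℝ)
    (hbdd : ∀ t : ℝ, ‖qt t‖ ≤ M₀)
    (hsupp : ∀ t : ℝ, t ∉ Set.Icc (0:ℝ) 1 → qt t = 0)
    (Ct : ℝ)
    (hdec : ∀ τ : ℝ, 0 < τ →
      ‖∫ t in (0:ℝ)..1, Complex.exp (-((t : ℂ) * (τ : ℂ))) * qt t‖ ≤ Real.exp (-τ / Ct))
    (x : ℝ) (hx0 : 0 < x) (hx : x < 1 / Ct) :
    ∫ t in (0:ℝ)..x, qt t = 0 := by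
  have hlin : Filter.Tendsto (fun n : ℕ => (n:ℝ)) Filter.atTop Filter.atTop :=
    tendsto_natCast_atTop_atTop
  have hne : ∀ᵐ t : ℝ, t ≠ x := by simp [ae_iff, measure_singleton]
  have hL : Filter.Tendsto (fun n : ℕ => ∫ t in (0:ℝ)..1,
      ((Real.exp (-Real.exp ((n:ℝ) * (x - t))) - 1 : ℝ) : ℂ) * qt t) Filter.atTop
      (nhds (∫ t in (0:ℝ)..1, - (Set.Iio x).indicator qt t)) := by
    apply intervalIntegral.tendsto_integral_filter_of_dominated_convergence (fun _ => M₀)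
    · refine Filter.Eventually.of_forall fun n => ?_
      apply Measurable.aestronglyMeasurable
      fun_prop
    · refine Filter.Eventually.of_forall fun n => ?_
      refine Filter.Eventually.of_forall fun t ht => ?_
      rw [norm_mul, Complex.norm_real, Real.norm_eq_abs]
      have : |Real.exp (-Real.exp ((n:ℝ) * (x - t))) - 1| ≤ 1 := by
        rw [abs_le]
        have h1 := Real.exp_pos (-Real.exp ((n:ℝ) * (x - t)))
        have h2 : Real.exp (-Real.exp ((n:ℝ) * (x - t))) ≤ 1 :=
          Real.exp_le_one_iff.2 (by linarith [Real.exp_pos ((n:ℝ) * (x - t))])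
        constructor <;> linarith
      calc _ ≤ 1 * M₀ := by gcongr; exact hbdd t
        _ = M₀ := one_mul _
    · simp
    · filter_upwards [hne] with t ht _
      rcases lt_or_gt_of_ne ht with h | h
      · rw [Set.indicator_of_mem (Set.mem_Iio.2 h)]
        have h1 : Filter.Tendsto (fun n : ℕ => (n:ℝ) * (x - t)) Filter.atTop Filter.atTop :=
          hlin.atTop_mul_const (by linarith)
        have h2 := (Real.tendsto_exp_neg_atTop_nhds_zero.comp
          (Real.tendsto_exp_atTop.comp h1)).sub_const 1
        have h3 := ((Complex.continuous_ofReal.tendsto _).comp h2).mul_const (qt t)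
        simpa [Function.comp_def] using h3
      · rw [Set.indicator_of_notMem (by simpa using h.le)]
        have h1 : Filter.Tendsto (fun n : ℕ => (n:ℝ) * (x - t)) Filter.atTop Filter.atBot :=
          hlin.atTop_mul_const_of_neg (by linarith)
        have h2 := ((Real.continuous_exp.tendsto _).comp
          (Real.tendsto_exp_atBot.comp h1).neg).sub_const 1
        have h3 := ((Complex.continuous_ofReal.tendsto _).comp h2).mul_const (qt t)
        simpa [Function.comp_def] using h3
  have hR : Filter.Tendsto (fun n : ℕ => Real.exp (Real.exp ((n:ℝ) * (x - 1 / Ct))) - 1)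
      Filter.atTop (nhds 0) := by
    have h1 : Filter.Tendsto (fun n : ℕ => (n:ℝ) * (x - 1 / Ct)) Filter.atTop Filter.atBot :=
      hlin.atTop_mul_const_of_neg (by linarith)
    have h2 := ((Real.continuous_exp.tendsto _).comp
      (Real.tendsto_exp_atBot.comp h1)).sub_const 1
    simpa [Function.comp_def] using h2
  have hL0 := squeeze_zero_norm' (a := fun n : ℕ =>
      Real.exp (Real.exp ((n:ℝ) * (x - 1 / Ct))) - 1) (by
    filter_upwards [Filter.eventually_gt_atTop 0] with n hn
    exact aux_bound_s7 qt hmeas M₀ hbdd Ct hdec x n (by exact_mod_cast hn)) hR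
  have h0 := tendsto_nhds_unique hL hL0
  rw [intervalIntegral.integral_neg, neg_eq_zero] at h0
  rw [← h0, intervalIntegral.integral_of_le hx0.le, intervalIntegral.integral_of_le zero_le_one,
    ← integral_indicator measurableSet_Ioc, ← integral_indicator measurableSet_Ioc]
  apply integral_congr_ae
  filter_upwards [hne] with t ht
  have := hsupp t
  simp only [Set.indicator_apply, Set.mem_Ioc, Set.mem_Iio, Set.mem_Icc] at *
  grind



/-- Let `q̃ ∈ L^∞(ℝ, ℂ)` be supported in `[0,1]` and suppose its
Laplace transform satisfies `|Lq̃(τ)| ≤ e^{-τ/C̃}` for all real `τ > 0`. Then `q̃`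
vanishes in a neighborhood of `0`: `q̃(t) = 0` for a.e. `t ∈ [0, 1/C̃)`. -/
theorem stmt_7 (qt : ℝ → ℂ) (hmeas : Measurable qt) (M₀ : ℝ)
    (hbdd : ∀ t : ℝ, ‖qt t‖ ≤ M₀)
    (hsupp : ∀ t : ℝ, t ∉ Set.Icc (0:ℝ) 1 → qt t = 0)
    (Ct : ℝ) (hCt : 0 < Ct)
    (hdec : ∀ τ : ℝ, 0 < τ →
      ‖∫ t in (0:ℝ)..1, Complex.exp (-((t : ℂ) * (τ : ℂ))) * qt t‖ ≤ Real.exp (-τ / Ct)) :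
    ∀ᵐ t ∂(volume.restrict (Set.Ico (0:ℝ) (1 / Ct))), qt t = 0 := by
  have hM : 0 ≤ M₀ := (norm_nonneg _).trans (hbdd 0)
  have hloc : LocallyIntegrable qt volume := by
    refine (locallyIntegrable_const (M₀ : ℝ)).mono hmeas.aestronglyMeasurable ?_
    refine Filter.Eventually.of_forall fun t => ?_
    simpa [abs_of_nonneg hM] using hbdd t
  have hne : ∀ᵐ t : ℝ, t ≠ 0 := by simp [ae_iff, measure_singleton]
  rw [ae_restrict_iff' measurableSet_Ico]
  filter_upwards [LocallyIntegrable.ae_hasDerivAt_integral hloc, hne] with t ht h0 hI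
  have ht0 : 0 < t := lt_of_le_of_ne hI.1 (Ne.symm h0)
  refine (ht 0).unique ((hasDerivAt_const t (0:ℂ)).congr_of_eventuallyEq ?_)
  filter_upwards [Ioo_mem_nhds ht0 hI.2] with y hy
  exact aux_zero_s7 qt hmeas M₀ hbdd hsupp Ct hdec y hy.1 hy.2
end

section
/- Let n ≥ 1, let A and C be symmetric n×n complex matrices and B an invertible n×n complex matrix. Define φ(x, y) = (1/2)⟨Ax, x⟩ + ⟨By, x⟩ + (1/2)⟨Cy, y⟩, set D = (Bᵀ)⁻¹ C B⁻¹, let α ∈ ℝ, and let u : ℝⁿ → ℂ be continuous with compact support. For h > 0 and x ∈ ℝⁿ define F(h, x) = h^α ∫_{ℝⁿ} e^{iφ(x,y)/h} u(y) dy. Then F is smooth on (0, ∞) × ℝⁿ and satisfies, for all h > 0 and x ∈ ℝⁿ: (h/i) ∂_h F + (1/h) [ (−(1/2)⟨Ax, x⟩ + (1/2)⟨DAx, Ax⟩) F + Σ_{j=1}^n (x − DAx)_j (h/i) ∂_{x_j} F − (h²/2) Σ_{j,l=1}^n D_{jl} ∂_{x_j} ∂_{x_l} F ] + i (α + (1/2)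 tr(AD)) F = 0. -/
open Matrix MeasureTheory

noncomputable def ph {n : ℕ} (A B C : Matrix (Fin n) (Fin n) ℂ) (x y : Fin n → ℂ) : ℂ :=
  (1 / 2) * (A.mulVec x ⬝ᵥ x) + (B.mulVec y ⬝ᵥ x) + (1 / 2) * (C.mulVec y ⬝ᵥ y)

noncomputable def kr {n : ℕ} (A B C : Matrix (Fin n) (Fin n) ℂ) (h : ℝ) (x y : Fin n → ℝ) : ℂ :=
  Complex.exp (Complex.I * ph A B C (fun j => (x j : ℂ)) (fun j => (y j : ℂ)) / (h : ℂ))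

noncomputable def xi {n : ℕ} (A B : Matrix (Fin n) (Fin n) ℂ) (x y : Fin n → ℂ) : Fin n → ℂ :=
  A.mulVec x + B.mulVec y

theorem ofReal_cd {n : ℕ} (j : Fin n) :
    ContDiff ℝ (⊤ : ℕ∞) (fun x : Fin n → ℝ => ((x j : ℝ):ℂ)) :=
  Complex.ofRealCLM.contDiff.comp (contDiff_apply ℝ ℝ j)

theorem ph_contDiff {n : ℕ} (A B C : Matrix (Fin n) (Fin n) ℂ) :
    ContDiff ℝ (⊤ : ℕ∞) (fun q : (ℝ × (Fin n → ℝ)) × (Fin n → ℝ) =>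
      ph A B C (fun j => (q.1.2 j : ℂ)) (fun j => (q.2 j : ℂ))) := by
  unfold ph
  simp only [mulVec, dotProduct]
  have h1 : ∀ j, ContDiff ℝ (⊤ : ℕ∞)
      (fun q : (ℝ × (Fin n → ℝ)) × (Fin n → ℝ) => ((q.1.2 j : ℝ) : ℂ)) :=
    fun j => (ofReal_cd j).comp (contDiff_snd.comp contDiff_fst)
  have h2 : ∀ j, ContDiff ℝ (⊤ : ℕ∞)
      (fun q : (ℝ × (Fin n → ℝ)) × (Fin n → ℝ) => ((q.2 j : ℝ) : ℂ)) :=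
    fun j => (ofReal_cd j).comp contDiff_snd
  fun_prop

theorem kr_contDiffOn {n : ℕ} (A B C : Matrix (Fin n) (Fin n) ℂ) :
    ContDiffOn ℝ (⊤ : ℕ∞)
      (fun q : (ℝ × (Fin n → ℝ)) × (Fin n → ℝ) => kr A B C q.1.1 q.1.2 q.2)
      ((Set.Ioi (0 : ℝ) ×ˢ Set.univ) ×ˢ Set.univ) := by
  unfold kr
  have h3 : ContDiff ℝ (⊤ : ℕ∞)
      (fun q : (ℝ × (Fin n → ℝ)) × (Fin n → ℝ) => ((q.1.1 : ℝ) : ℂ)) :=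
    Complex.ofRealCLM.contDiff.comp (contDiff_fst.comp contDiff_fst)
  refine ContDiffOn.cexp ?_
  simp only [div_eq_mul_inv]
  refine ContDiffOn.mul ((contDiff_const.mul (ph_contDiff A B C)).contDiffOn) 
    (h3.contDiffOn.inv ?_)
  rintro q ⟨⟨hq, -⟩, -⟩
  exact_mod_cast (ne_of_gt hq)

theorem smooth1 {n : ℕ} (A B C : Matrix (Fin n) (Fin n) ℂ) (u : (Fin n → ℝ) → ℂ)
    (hu : Continuous u) (hcs : HasCompactSupport u) :
    ContDiffOn ℝ (⊤ : ℕ∞) (fun q : (ℝ × (Fin n → ℝ))  => ∫ y, kr A B C q.1 q.2 y * u y)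
      (Set.Ioi (0 : ℝ) ×ˢ Set.univ) := by
  obtain ⟨R, hR0, hR⟩ := hcs.isCompact.isBounded.subset_closedBall_lt 0 (0 : Fin n → ℝ)
  let χ : ContDiffBump (0 : Fin n → ℝ) := ⟨R, R + 1, hR0, by linarith⟩
  let g : (ℝ × (Fin n → ℝ)) → (Fin n → ℝ) → ℂ := fun p z => ((χ z : ℝ) : ℂ) * kr A B C p.1 p.2 (-z)
  have hg : ContDiffOn ℝ (⊤ : ℕ∞) (↿g) ((Set.Ioi (0 : ℝ) ×ˢ Set.univ) ×ˢ Set.univ) := by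
    have e1 : ContDiff ℝ (⊤ : ℕ∞) (fun q : (ℝ × (Fin n → ℝ)) × (Fin n → ℝ) => ((χ q.2 : ℝ) : ℂ)) :=
      Complex.ofRealCLM.contDiff.comp (χ.contDiff.comp contDiff_snd)
    have e2 : ContDiffOn ℝ (⊤ : ℕ∞) (fun q : (ℝ × (Fin n → ℝ)) × (Fin n → ℝ) =>
        kr A B C q.1.1 q.1.2 (-q.2)) ((Set.Ioi (0 : ℝ) ×ˢ Set.univ) ×ˢ Set.univ) := by
      refine (kr_contDiffOn A B C).comp
        (f := fun q : (ℝ × (Fin n → ℝ)) × (Fin n → ℝ) => (q.1, -q.2)) ?_ ?_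
      · exact (contDiff_fst.prodMk contDiff_snd.neg).contDiffOn
      · rintro q ⟨hq, -⟩
        exact ⟨hq, trivial⟩
    exact e1.contDiffOn.mul e2
  have key := contDiffOn_convolution_right_with_param (μ := volume) (f := u)
    (ContinuousLinearMap.mul ℝ ℂ) (g := g)
    (isOpen_Ioi.prod isOpen_univ) (isCompact_closedBall (0 : Fin n → ℝ) (R + 1)) ?_
    hu.locallyIntegrable hg
  · have := key.comp (f := fun p : ℝ × (Fin n → ℝ) => (p, (0 : Fin n → ℝ)))
      (s := Set.Ioi (0 : ℝ) ×ˢ Set.univ)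
      (contDiff_id.prodMk contDiff_const).contDiffOn (fun p hp => ⟨hp, trivial⟩)
    refine this.congr ?_
    intro p hp
    simp only [Function.comp, convolution, ContinuousLinearMap.mul_apply']
    congr 1
    ext y
    by_cases hy : u y = 0
    · simp [hy]
    · have : y ∈ Metric.closedBall (0 : Fin n → ℝ) R := hR (subset_tsupport _ hy)
      have hχ : χ (0 - y) = 1 := by
        apply χ.one_of_mem_closedBall
        simpa using this
      simp only [g, hχ]
      simp [mul_comm]
  · intro p z _ hz
    have : χ z = 0 := by
      apply χ.zero_of_le_dist
      simp only [Metric.mem_closedBall, not_le] at hz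
      exact hz.le
    simp [g, this]

theorem dint {Y : Type*} [TopologicalSpace Y] [MeasurableSpace Y] [BorelSpace Y] 
    [SecondCountableTopology Y] (μ : Measure Y) [IsFiniteMeasureOnCompacts μ]
    (u : Y → ℂ) (hu : Continuous u) (hcs : HasCompactSupport u)
    (S : Set ℝ) (hS : IsOpen S) (t0 : ℝ) (ht : t0 ∈ S) (g g' : ℝ → Y → ℂ)
    (hd : ∀ t ∈ S, ∀ y, HasDerivAt (fun s => g s y) (g' t y) t)
    (hg : ∀ t ∈ S, Continuous (g t)) 
    (hg' : ContinuousOn (fun p : ℝ × Y => g' p.1 p.2) (S ×ˢ Set.univ)) :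
    HasDerivAt (fun t => ∫ y, g t y * u y ∂μ) (∫ y, g' t0 y * u y ∂μ) t0 := by
  obtain ⟨ε, hε, hball⟩ := Metric.nhds_basis_closedBall.mem_iff.1 (hS.mem_nhds ht)
  have hK : IsCompact (Metric.closedBall t0 ε ×ˢ tsupport u) :=
    (isCompact_closedBall t0 ε).prod hcs.isCompact
  obtain ⟨M, hM⟩ := hK.exists_bound_of_continuousOn
    (hg'.mono (Set.prod_mono hball (Set.subset_univ _)))
  have hg1 : Continuous (g' t0) := by
    have := hg'.comp_continuous (f := fun y : Y => (t0, y)) (by fun_prop) (fun y => ⟨ht, trivial⟩)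
    exact this
  refine (hasDerivAt_integral_of_dominated_loc_of_deriv_le (bound := fun y => M * ‖u y‖)
    (F' := fun t y => g' t y * u y)
    (Metric.closedBall_mem_nhds t0 hε) ?_ ?_ ?_ ?_ ?_ ?_).2
  · filter_upwards [hS.mem_nhds ht] with t h
    exact ((hg t h).mul hu).aestronglyMeasurable
  · exact ((hg t0 ht).mul hu).integrable_of_hasCompactSupport hcs.mul_left
  · exact (hg1.mul hu).aestronglyMeasurable
  · refine Filter.Eventually.of_forall fun y t h => ?_
    by_cases hy : u y = 0
    · simp [hy]
    · rw [norm_mul]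
      exact mul_le_mul_of_nonneg_right (hM (t, y) ⟨h, subset_tsupport _ hy⟩) (norm_nonneg _)
  · exact (hu.integrable_of_hasCompactSupport hcs).norm.const_mul M
  · exact Filter.Eventually.of_forall fun y t h => (hd t (hball h) y).mul_const _

theorem cast_line {n : ℕ} (x : Fin n → ℝ) (j : Fin n) (t : ℝ) :
    (fun k => (((x + t • Pi.single j 1 : Fin n → ℝ) k : ℝ) : ℂ)) =
      (fun k => (x k : ℂ)) + (t : ℂ) • Pi.single j (1 : ℂ) := by
  ext k
  by_cases h : k = j
  · subst h; simp
  · simp [h]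

theorem ph_line {n : ℕ} (A B C : Matrix (Fin n) (Fin n) ℂ) (hA : A.IsSymm) (x y : Fin n → ℂ)
    (j : Fin n) (t : ℂ) :
    ph A B C (x + t • Pi.single j (1 : ℂ)) y = 
      ph A B C x y + t * xi A B x y j + t ^ 2 / 2 * A j j := by
  have h1 : A.mulVec (Pi.single j (1:ℂ)) ⬝ᵥ x = A.mulVec x j := by
    rw [mulVec_single_one]
    simp only [mulVec, dotProduct, col_apply]
    refine Finset.sum_congr rfl fun k _ => ?_
    rw [hA.apply]
  simp only [ph, xi, mulVec_add, mulVec_smul, add_dotProduct, dotProduct_add, smul_dotProduct, 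
    dotProduct_smul, h1, smul_eq_mul, dotProduct_single_one, Pi.add_apply]
  simp only [mulVec_single_one, col_apply, Pi.smul_apply, smul_eq_mul]
  ring

theorem xi_line {n : ℕ} (A B : Matrix (Fin n) (Fin n) ℂ) (x y : Fin n → ℂ)
    (j l : Fin n) (t : ℂ) :
    xi A B (x + t • Pi.single j (1 : ℂ)) y l = xi A B x y l + t * A l j := by
  simp only [xi, mulVec_add, mulVec_smul, Pi.add_apply, Pi.smul_apply, mulVec_single_one,
    col_apply, smul_eq_mul]
  ring

theorem xi_cont {n : ℕ} (A B : Matrix (Fin n) (Fin n) ℂ) (l : Fin n) :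
    Continuous (fun q : (Fin n → ℝ) × (Fin n → ℝ) =>
      xi A B (fun k => (q.1 k : ℂ)) (fun k => (q.2 k : ℂ)) l) := by
  simp only [xi, mulVec, dotProduct, Pi.add_apply]
  fun_prop

theorem ph_cont {n : ℕ} (A B C : Matrix (Fin n) (Fin n) ℂ) :
    Continuous (fun q : (Fin n → ℝ) × (Fin n → ℝ) =>
      ph A B C (fun k => (q.1 k : ℂ)) (fun k => (q.2 k : ℂ))) := by
  simp only [ph, mulVec, dotProduct]
  fun_prop

theorem kr_cont {n : ℕ} (A B C : Matrix (Fin n) (Fin n) ℂ) (h : ℝ) :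
    Continuous (fun q : (Fin n → ℝ) × (Fin n → ℝ) => kr A B C h q.1 q.2) := by
  have := ph_cont A B C
  unfold kr
  fun_prop

theorem kr_line_deriv {n : ℕ} (A B C : Matrix (Fin n) (Fin n) ℂ) (hA : A.IsSymm) (h : ℝ)
    (x y : Fin n → ℝ) (j : Fin n) (t : ℝ) :
    HasDerivAt (fun s : ℝ => kr A B C h (x + s • Pi.single j 1) y)
      (Complex.I / h * xi A B (fun k => ((x + t • Pi.single j 1 : Fin n → ℝ) k : ℂ))
        (fun k => (y k : ℂ)) j * kr A B C h (x + t • Pi.single j 1) y) t := by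
  unfold kr
  simp only [cast_line, ph_line A B C hA, xi_line]
  have ht : HasDerivAt (fun s : ℝ => (s : ℂ)) 1 t := Complex.ofRealCLM.hasDerivAt
  set a := ph A B C (fun k => (x k : ℂ)) (fun k => (y k : ℂ))
  set b := xi A B (fun k => (x k : ℂ)) (fun k => (y k : ℂ)) j
  have := ((((ht.mul_const b).const_add a).add (((ht.pow 2).div_const 2).mul_const (A j j))).const_mul
    Complex.I).div_const (h : ℂ)
  refine this.cexp.congr_deriv ?_
  simp
  ring

theorem xi_line_deriv {n : ℕ} (A B : Matrix (Fin n) (Fin n) ℂ)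
    (x y : Fin n → ℝ) (j l : Fin n) (t : ℝ) :
    HasDerivAt (fun s : ℝ => xi A B (fun k => ((x + s • Pi.single j 1 : Fin n → ℝ) k : ℂ))
        (fun k => (y k : ℂ)) l) (A l j) t := by
  simp only [cast_line, xi_line]
  have ht : HasDerivAt (fun s : ℝ => (s : ℂ)) 1 t := Complex.ofRealCLM.hasDerivAt
  simpa using ht.mul_const (A l j)

theorem kr_h_deriv {n : ℕ} (A B C : Matrix (Fin n) (Fin n) ℂ) (h : ℝ) (hh : 0 < h)
    (x y : Fin n → ℝ) :
    HasDerivAt (fun s : ℝ => kr A B C s x y)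
      (-Complex.I / (h : ℂ) ^ 2 * ph A B C (fun k => (x k : ℂ))
        (fun k => (y k : ℂ)) * kr A B C h x y) h := by
  unfold kr
  have hne : (h : ℂ) ≠ 0 := by exact_mod_cast hh.ne'
  have ht : HasDerivAt (fun s : ℝ => (s : ℂ)) 1 h := Complex.ofRealCLM.hasDerivAt
  set a := ph A B C (fun k => (x k : ℂ)) (fun k => (y k : ℂ))
  have := (ht.inv hne).const_mul (Complex.I * a)
  simp only [div_eq_mul_inv]
  refine this.cexp.congr_deriv ?_
  simp
  ring

theorem fderiv_line {n : ℕ} (f : (Fin n → ℝ) → ℂ) (x : Fin n → ℝ) (j : Fin n) (c : ℂ)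
    (hf : DifferentiableAt ℝ f x)
    (hd : HasDerivAt (fun s : ℝ => f (x + s • Pi.single j 1)) c 0) :
    fderiv ℝ f x (Pi.single j 1) = c := by
  rw [← hf.lineDeriv_eq_fderiv]
  exact hd.deriv

theorem phase_id {n : ℕ} (A B C : Matrix (Fin n) (Fin n) ℂ)
    (hC : C.IsSymm) (hB : IsUnit B.det) (x y : Fin n → ℂ) :
    ph A B C x y = (-(1 / 2) * (A.mulVec x ⬝ᵥ x)
        + (1 / 2) * ((Bᵀ⁻¹ * C * B⁻¹).mulVec (A.mulVec x) ⬝ᵥ A.mulVec x))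
      + (∑ j, (x j - (Bᵀ⁻¹ * C * B⁻¹).mulVec (A.mulVec x) j) * xi A B x y j)
      + 1 / 2 * ∑ j, ∑ l, (Bᵀ⁻¹ * C * B⁻¹) j l * (xi A B x y j * xi A B x y l) := by
  set D := Bᵀ⁻¹ * C * B⁻¹ with hD
  have hDs : D.IsSymm := by
    rw [Matrix.IsSymm, hD]
    simp only [transpose_mul, transpose_nonsing_inv, transpose_transpose, hC.eq, Matrix.mul_assoc]
  have hBt : IsUnit (Bᵀ).det := by rwa [det_transpose]
  have hDB : Bᵀ * (D * B) = C := by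
    rw [hD, Matrix.mul_assoc, Matrix.mul_assoc, nonsing_inv_mul B hB, Matrix.mul_one,
      mul_nonsing_inv_cancel_left _ _ hBt]
  have e1 : ∑ j, (x j - D.mulVec (A.mulVec x) j) * xi A B x y j
      = (x - D.mulVec (A.mulVec x)) ⬝ᵥ xi A B x y := rfl
  have e2 : ∑ j, ∑ l, D j l * (xi A B x y j * xi A B x y l) =
      D.mulVec (xi A B x y) ⬝ᵥ xi A B x y := by
    simp only [mulVec, dotProduct, Finset.sum_mul]
    refine Finset.sum_congr rfl fun j _ => Finset.sum_congr rfl fun l _ => ?_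
    ring
  have e3 : C.mulVec y ⬝ᵥ y = D.mulVec (B.mulVec y) ⬝ᵥ B.mulVec y := by
    rw [← hDB, ← mulVec_mulVec, ← mulVec_mulVec, mulVec_transpose, ← dotProduct_mulVec]
  have e4 : D.mulVec (B.mulVec y) ⬝ᵥ A.mulVec x = D.mulVec (A.mulVec x) ⬝ᵥ B.mulVec y := by
    rw [dotProduct_comm, dotProduct_mulVec, ← mulVec_transpose, hDs.eq]
  rw [e1, e2, ph, e3, xi]
  simp only [mulVec_add, add_dotProduct, dotProduct_add, sub_dotProduct, e4]
  rw [dotProduct_comm x (A.mulVec x), dotProduct_comm x (B.mulVec y)]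
  ring

theorem d1 {n : ℕ} (A B C : Matrix (Fin n) (Fin n) ℂ) (hA : A.IsSymm) (u : (Fin n → ℝ) → ℂ)
    (hu : Continuous u) (hcs : HasCompactSupport u) (h : ℝ) (x : Fin n → ℝ) (l : Fin n) :
    HasDerivAt (fun s : ℝ => ∫ y, kr A B C h (x + s • Pi.single l 1) y * u y)
      (Complex.I / h * ∫ y, xi A B (fun k => (x k : ℂ)) (fun k => (y k : ℂ)) l
        * (kr A B C h x y * u y)) 0 := by
  have k1 := kr_cont A B C h
  have k2 := xi_cont A B l
  have := dint volume u hu hcs Set.univ isOpen_univ 0 trivial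
    (fun s y => kr A B C h (x + s • Pi.single l 1) y) _
    (fun t _ y => kr_line_deriv A B C hA h x y l t)
    (fun t _ => k1.comp (f := fun y => (x + t • Pi.single l 1, y)) (by fun_prop))
    (by
      have a1 := k1.comp (f := fun p : ℝ × (Fin n → ℝ) => (x + p.1 • Pi.single l 1, p.2))
        (by fun_prop)
      have a2 := k2.comp (f := fun p : ℝ × (Fin n → ℝ) => (x + p.1 • Pi.single l 1, p.2))
        (by fun_prop)
      exact ((continuous_const.mul a2).mul a1).continuousOn)
  refine this.congr_deriv ?_
  rw [← integral_const_mul]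
  congr 1
  ext y
  simp only [zero_smul, add_zero]
  ring

theorem d2 {n : ℕ} (A B C : Matrix (Fin n) (Fin n) ℂ) (hA : A.IsSymm) (u : (Fin n → ℝ) → ℂ)
    (hu : Continuous u) (hcs : HasCompactSupport u) (h : ℝ) (x : Fin n → ℝ) (j l : Fin n) :
    HasDerivAt (fun s : ℝ => ∫ y, xi A B (fun k => ((x + s • Pi.single j 1 : Fin n → ℝ) k : ℂ))
        (fun k => (y k : ℂ)) l * (kr A B C h (x + s • Pi.single j 1) y * u y))
      (A l j * (∫ y, kr A B C h x y * u y) +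
       Complex.I / h * ∫ y, xi A B (fun k => (x k : ℂ)) (fun k => (y k : ℂ)) j *
        xi A B (fun k => (x k : ℂ)) (fun k => (y k : ℂ)) l
        * (kr A B C h x y * u y)) 0 := by
  have k1 := kr_cont A B C h
  have k2 := xi_cont A B l
  have k3 := xi_cont A B j
  have := dint volume u hu hcs Set.univ isOpen_univ 0 trivial
    (fun s y => xi A B (fun k => ((x + s • Pi.single j 1 : Fin n → ℝ) k : ℂ))
        (fun k => (y k : ℂ)) l * kr A B C h (x + s • Pi.single j 1) y) _
    (fun t _ y => (xi_line_deriv A B x y j l t).mul (kr_line_deriv A B C hA h x y j t))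
    (fun t _ => (k2.mul k1).comp (f := fun y => (x + t • Pi.single j 1, y)) (by fun_prop))
    (by
      have a1 := k1.comp (f := fun p : ℝ × (Fin n → ℝ) => (x + p.1 • Pi.single j 1, p.2))
        (by fun_prop)
      have a2 := k2.comp (f := fun p : ℝ × (Fin n → ℝ) => (x + p.1 • Pi.single j 1, p.2))
        (by fun_prop)
      have a3 := k3.comp (f := fun p : ℝ × (Fin n → ℝ) => (x + p.1 • Pi.single j 1, p.2))
        (by fun_prop)
      exact ((continuous_const.mul a1).add (a2.mul ((continuous_const.mul a3).mul a1))).continuousOn)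
  simp only [mul_assoc] at this ⊢
  refine this.congr_deriv ?_
  have b1 : Continuous (fun y => kr A B C h x y) := k1.comp (f := fun y => (x, y)) (by fun_prop)
  have b2 := k2.comp (f := fun y => (x, y)) (by fun_prop)
  have b3 := k3.comp (f := fun y => (x, y)) (by fun_prop)
  rw [← integral_const_mul, ← integral_const_mul, ← integral_add]
  · congr 1
    ext y
    simp only [zero_smul, add_zero]
    ring
  · exact (continuous_const.mul (b1.mul hu)).integrable_of_hasCompactSupport hcs.mul_left.mul_left
  · exact (continuous_const.mul (b3.mul (b2.mul (b1.mul hu)))).integrable_of_hasCompactSupport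
      hcs.mul_left.mul_left.mul_left.mul_left

theorem dh {n : ℕ} (A B C : Matrix (Fin n) (Fin n) ℂ) (u : (Fin n → ℝ) → ℂ)
    (hu : Continuous u) (hcs : HasCompactSupport u) (h : ℝ) (hh : 0 < h) (x : Fin n → ℝ) :
    HasDerivAt (fun s : ℝ => ∫ y, kr A B C s x y * u y)
      (-Complex.I / (h : ℂ) ^ 2 * ∫ y, ph A B C (fun k => (x k : ℂ)) (fun k => (y k : ℂ))
        * (kr A B C h x y * u y)) h := by
  have k2 := ph_cont A B C
  have := dint volume u hu hcs (Set.Ioi 0) isOpen_Ioi h hh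
    (fun s y => kr A B C s x y) _
    (fun t ht y => kr_h_deriv A B C t ht x y)
    (fun t _ => (kr_cont A B C t).comp (f := fun y => (x, y)) (by fun_prop))
    (by
      have a1 : ContinuousOn (fun p : ℝ × (Fin n → ℝ) => kr A B C p.1 x p.2) 
          (Set.Ioi 0 ×ˢ Set.univ) :=
        (kr_contDiffOn A B C).continuousOn.comp (f := fun p : ℝ × (Fin n → ℝ) => ((p.1, x), p.2))
          (by fun_prop) (fun p hp => ⟨⟨hp.1, trivial⟩, trivial⟩)
      have a2 := k2.comp (f := fun p : ℝ × (Fin n → ℝ) => (x, p.2))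
        (by fun_prop)
      refine ContinuousOn.mul (ContinuousOn.mul ?_ a2.continuousOn) a1
      refine ContinuousOn.div continuousOn_const (by fun_prop) ?_
      intro p hp
      have : (p.1 : ℂ) ≠ 0 := by exact_mod_cast (ne_of_gt hp.1)
      exact pow_ne_zero 2 this)
  refine this.congr_deriv ?_
  rw [← integral_const_mul]
  congr 1
  ext y
  ring

theorem moment_id {n : ℕ} (A B C : Matrix (Fin n) (Fin n) ℂ)
    (hC : C.IsSymm) (hB : IsUnit B.det) (u : (Fin n → ℝ) → ℂ)
    (hu : Continuous u) (hcs : HasCompactSupport u) (h : ℝ) (x : Fin n → ℝ) :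
    (∫ y, ph A B C (fun k => (x k : ℂ)) (fun k => (y k : ℂ)) * (kr A B C h x y * u y)) =
      (-(1 / 2) * (A.mulVec (fun j => (x j : ℂ)) ⬝ᵥ fun j => (x j : ℂ))
        + (1 / 2) * ((Bᵀ⁻¹ * C * B⁻¹).mulVec (A.mulVec fun j => (x j : ℂ)) ⬝ᵥ
                    A.mulVec fun j => (x j : ℂ))) * (∫ y, kr A B C h x y * u y)
      + (∑ j, ((x j : ℂ) - (Bᵀ⁻¹ * C * B⁻¹).mulVec (A.mulVec fun i => (x i : ℂ)) j) *
          ∫ y, xi A B (fun k => (x k : ℂ)) (fun k => (y k : ℂ)) j * (kr A B C h x y * u y))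
      + 1 / 2 * ∑ j, ∑ l, (Bᵀ⁻¹ * C * B⁻¹) j l * 
        ∫ y, xi A B (fun k => (x k : ℂ)) (fun k => (y k : ℂ)) j *
          xi A B (fun k => (x k : ℂ)) (fun k => (y k : ℂ)) l * (kr A B C h x y * u y) := by
  have b1 : Continuous (fun y => kr A B C h x y * u y) :=
    ((kr_cont A B C h).comp (f := fun y => (x, y)) (by fun_prop)).mul hu
  have c1 : HasCompactSupport (fun y => kr A B C h x y * u y) := hcs.mul_left
  have b2 : ∀ j, Continuous (fun y : Fin n → ℝ => 
      xi A B (fun k => (x k : ℂ)) (fun k => (y k : ℂ)) j) :=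
    fun j => (xi_cont A B j).comp (f := fun y => (x, y)) (by fun_prop)
  have hint : ∀ w : (Fin n → ℝ) → ℂ, Continuous w →
      Integrable (fun y => w y * (kr A B C h x y * u y)) := fun w hw =>
    (hw.mul b1).integrable_of_hasCompactSupport c1.mul_left
  set D := Bᵀ⁻¹ * C * B⁻¹ with hD
  generalize hc : (-(1 / 2) * (A.mulVec (fun j => (x j : ℂ)) ⬝ᵥ fun j => (x j : ℂ))
        + (1 / 2) * (D.mulVec (A.mulVec fun j => (x j : ℂ)) ⬝ᵥ
                    A.mulVec fun j => (x j : ℂ))) = c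
  generalize hv : D.mulVec (A.mulVec fun i => (x i : ℂ)) = v at *
  have hfun : (fun y : Fin n → ℝ => ph A B C (fun k => (x k : ℂ)) (fun k => (y k : ℂ)) *
      (kr A B C h x y * u y)) = fun y => (c * (kr A B C h x y * u y) +
      ∑ j, ((x j : ℂ) - v j) *
        (xi A B (fun k => (x k : ℂ)) (fun k => (y k : ℂ)) j * (kr A B C h x y * u y))) +
      1 / 2 * ∑ j, ∑ l, D j l * (xi A B (fun k => (x k : ℂ)) (fun k => (y k : ℂ)) j *
          xi A B (fun k => (x k : ℂ)) (fun k => (y k : ℂ)) l * (kr A B C h x y * u y)) := by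
    ext y
    rw [phase_id A B C hC hB, ← hD, hv, hc]
    generalize kr A B C h x y * u y = K
    rw [add_mul, add_mul, Finset.sum_mul, mul_assoc (1 / 2), Finset.sum_mul]
    simp only [Finset.sum_mul, mul_assoc]
  have i1 : ∀ j, Integrable (fun y : Fin n → ℝ => ((x j : ℂ) - v j) *
        (xi A B (fun k => (x k : ℂ)) (fun k => (y k : ℂ)) j * (kr A B C h x y * u y))) :=
    fun j => (hint _ (b2 j)).const_mul _
  have i2 : ∀ j l, Integrable (fun y : Fin n → ℝ => D j l *
      (xi A B (fun k => (x k : ℂ)) (fun k => (y k : ℂ)) j *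
          xi A B (fun k => (x k : ℂ)) (fun k => (y k : ℂ)) l * (kr A B C h x y * u y))) :=
    fun j l => (hint _ ((b2 j).mul (b2 l))).const_mul _
  have i0 : Integrable (fun y => c * (kr A B C h x y * u y)) :=
    (b1.integrable_of_hasCompactSupport c1).const_mul _
  have i01 : Integrable (fun y => c * (kr A B C h x y * u y) + ∑ j, ((x j : ℂ) - v j) *
        (xi A B (fun k => (x k : ℂ)) (fun k => (y k : ℂ)) j * (kr A B C h x y * u y))) :=
    i0.add (integrable_finsetSum _ fun j _ => i1 j)
  rw [hfun, integral_add i01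
    ((integrable_finsetSum _ fun j _ => integrable_finsetSum _ fun l _ => i2 j l).const_mul _),
    integral_add i0 (integrable_finsetSum _ fun j _ => i1 j), integral_const_mul,
    integral_const_mul, integral_finsetSum _ (fun j _ => i1 j),
    integral_finsetSum _ (fun j _ => integrable_finsetSum _ fun l _ => i2 j l)]
  simp only [integral_const_mul]
  congr 2
  refine Finset.sum_congr rfl fun j _ => ?_
  rw [integral_finsetSum _ (fun l _ => i2 j l)]
  simp only [integral_const_mul]

/-- With `φ`, `D` as in Statement 10, `α ∈ ℝ` and `u` continuous
with compact support, the FBI-type transform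
`F(h,x) = h^α ∫_{ℝⁿ} e^{iφ(x,y)/h} u(y) dy` is smooth on `(0,∞) × ℝⁿ` and satisfies
`(hD_h + (1/h) P_α) F = 0`, `P_α = p(x,hD_x) + ih(α + (1/2) tr(AD))`, that is:
`(h/i)∂_h F + (1/h)[(-(1/2)⟨Ax,x⟩+(1/2)⟨DAx,Ax⟩)F + ∑_j (x-DAx)_j (h/i)∂_{x_j}F
 - (h²/2)∑_{j,l} D_{jl}∂_{x_j}∂_{x_l}F] + i(α + (1/2)tr(AD))F = 0`. -/
theorem stmt_12 (n : ℕ) (hn : 1 ≤ n) (A B C : Matrix (Fin n) (Fin n) ℂ)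
    (hA : A.IsSymm) (hC : C.IsSymm) (hB : IsUnit B.det) (α : ℝ)
    (u : (Fin n → ℝ) → ℂ) (hu : Continuous u) (hcs : HasCompactSupport u) :
    let D := Bᵀ⁻¹ * C * B⁻¹
    let φ : (Fin n → ℂ) → (Fin n → ℂ) → ℂ := fun x y =>
      (1 / 2) * (A.mulVec x ⬝ᵥ x) + (B.mulVec y ⬝ᵥ x) + (1 / 2) * (C.mulVec y ⬝ᵥ y)
    let F : ℝ → (Fin n → ℝ) → ℂ := fun h x =>
      ((h ^ α : ℝ) : ℂ) *
        ∫ y : Fin n → ℝ,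
          Complex.exp (Complex.I * φ (fun j => (x j : ℂ)) (fun j => (y j : ℂ)) / (h : ℂ)) * u y
    let pd : ((Fin n → ℝ) → ℂ) → Fin n → (Fin n → ℝ) → ℂ :=
      fun f j x => fderiv ℝ f x (Pi.single j 1)
    ContDiffOn ℝ (⊤ : ℕ∞) (fun q : ℝ × (Fin n → ℝ) => F q.1 q.2) (Set.Ioi (0 : ℝ) ×ˢ Set.univ) ∧
    ∀ h : ℝ, 0 < h → ∀ x : Fin n → ℝ,
      ((h : ℂ) / Complex.I) * deriv (fun s : ℝ => F s x) h
        + (1 / (h : ℂ)) *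
            ((-(1 / 2) * (A.mulVec (fun j => (x j : ℂ)) ⬝ᵥ fun j => (x j : ℂ))
                + (1 / 2) * (D.mulVec (A.mulVec fun j => (x j : ℂ)) ⬝ᵥ
                    A.mulVec fun j => (x j : ℂ))) * F h x
              + (∑ j, ((x j : ℂ) - D.mulVec (A.mulVec fun i => (x i : ℂ)) j) *
                  ((h : ℂ) / Complex.I) * pd (F h) j x)
              - ((h : ℂ) ^ 2 / 2) * ∑ j, ∑ l, D j l * pd (fun x' => pd (F h) l x') j x)
        + Complex.I * ((α : ℂ) + (1 / 2) * (A * D).trace) * F h x = 0 := by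
  intro D φ F pd
  have hFs : ContDiffOn ℝ (⊤ : ℕ∞) (fun q : ℝ × (Fin n → ℝ) => F q.1 q.2)
      (Set.Ioi (0 : ℝ) ×ˢ Set.univ) := by
    refine ContDiffOn.mul ?_ (smooth1 A B C u hu hcs)
    refine Complex.ofRealCLM.contDiff.comp_contDiffOn ?_
    refine ContDiffOn.rpow_const_of_ne contDiff_fst.contDiffOn ?_
    rintro q ⟨hq, -⟩
    exact ne_of_gt hq
  refine ⟨hFs, ?_⟩
  intro h hh x
  have hne : (h : ℂ) ≠ 0 := by exact_mod_cast hh.ne'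
  have hFx : ContDiff ℝ (⊤ : ℕ∞) (F h) := by
    rw [← contDiffOn_univ]
    exact hFs.comp (f := fun x : Fin n → ℝ => (h, x)) (contDiff_const.prodMk contDiff_id).contDiffOn
      (fun x _ => ⟨hh, trivial⟩)
  have hpd1 : ∀ l x, pd (F h) l x = ((h ^ α : ℝ) : ℂ) * (Complex.I / h * 
      ∫ y, xi A B (fun k => (x k : ℂ)) (fun k => (y k : ℂ)) l * (kr A B C h x y * u y)) := by
    intro l x
    exact fderiv_line _ _ _ _ (hFx.differentiable (by simp) x)
      ((d1 A B C hA u hu hcs h x l).const_mul _)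
  have hpdd : ∀ l, Differentiable ℝ (fun x' => pd (F h) l x') := by
    intro l
    have : ContDiff ℝ 1 (fun x' => pd (F h) l x') :=
      (hFx.fderiv_right (m := 1) (by norm_cast)).clm_apply contDiff_const
    exact this.differentiable (by simp)
  have hpd2 : ∀ j l, pd (fun x' => pd (F h) l x') j x = ((h ^ α : ℝ) : ℂ) * (Complex.I / h * 
      (A l j * (∫ y, kr A B C h x y * u y) +
       Complex.I / h * ∫ y, xi A B (fun k => (x k : ℂ)) (fun k => (y k : ℂ)) j *
        xi A B (fun k => (x k : ℂ)) (fun k => (y k : ℂ)) l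
        * (kr A B C h x y * u y))) := by
    intro j l
    refine fderiv_line _ _ _ _ (hpdd l x) ?_
    simp only [hpd1]
    exact ((d2 A B C hA u hu hcs h x j l).const_mul _).const_mul _
  have hdh : deriv (fun s : ℝ => F s x) h = ((h ^ α : ℝ) : ℂ) * (α / h * 
      (∫ y, kr A B C h x y * u y) - Complex.I / (h : ℂ) ^ 2 *
        ∫ y, ph A B C (fun k => (x k : ℂ)) (fun k => (y k : ℂ)) * (kr A B C h x y * u y)) := by
    have e1 : HasDerivAt (fun s : ℝ => ((s ^ α : ℝ) : ℂ)) ((α * h ^ (α - 1) : ℝ) : ℂ) h :=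
      (Real.hasDerivAt_rpow_const (Or.inl hh.ne')).ofReal_comp
    have e2 := (e1.mul (dh A B C u hu hcs h hh x)).deriv
    refine Eq.trans e2 ?_
    rw [Real.rpow_sub_one hh.ne']
    push_cast
    ring
  have hF0 : F h x = ((h ^ α : ℝ) : ℂ) * ∫ y, kr A B C h x y * u y := rfl
  rw [hdh, hF0, moment_id A B C hC hB u hu hcs h x]
  simp only [hpd2]
  simp only [hpd1]
  change _ + _ * (_ + (∑ j, ((x j : ℂ) - D.mulVec (A.mulVec fun i => (x i : ℂ)) j) * _ * _) - _) 
    + _ = _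
  rw [show Bᵀ⁻¹ * C * B⁻¹ = D from rfl]
  have htr : (A * D).trace = ∑ j, ∑ l, D j l * A l j := by
    rw [trace_mul_comm]
    simp [trace, mul_apply]
  rw [htr]
  generalize ((h ^ α : ℝ) : ℂ) = H
  generalize (∫ y, kr A B C h x y * u y) = m0
  generalize (D.mulVec (A.mulVec fun i => (x i : ℂ))) = v
  set m1 : Fin n → ℂ := fun j => 
    ∫ y, xi A B (fun k => (x k : ℂ)) (fun k => (y k : ℂ)) j * (kr A B C h x y * u y) with hm1
  set m2 : Fin n → Fin n → ℂ := fun j l => 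
    ∫ y, xi A B (fun k => (x k : ℂ)) (fun k => (y k : ℂ)) j *
          xi A B (fun k => (x k : ℂ)) (fun k => (y k : ℂ)) l * (kr A B C h x y * u y) with hm2
  have s1 : ∑ j, ((x j : ℂ) - v j) * ((h : ℂ) / Complex.I) * (H * (Complex.I / h * m1 j)) 
      = H * ∑ j, ((x j : ℂ) - v j) * m1 j := by
    rw [Finset.mul_sum]
    refine Finset.sum_congr rfl fun j _ => ?_
    field_simp
  have s2 : ∑ j, ∑ l, D j l * (H * (Complex.I / h * (A l j * m0 + Complex.I / h * m2 j l))) =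
      H * (Complex.I / h * m0 * (∑ j, ∑ l, D j l * A l j) 
        - 1 / (h : ℂ) ^ 2 * ∑ j, ∑ l, D j l * m2 j l) := by
    simp only [Finset.mul_sum, ← Finset.sum_sub_distrib]
    refine Finset.sum_congr rfl fun j _ => Finset.sum_congr rfl fun l _ => ?_
    field_simp
    linear_combination (D j l * H * m2 j l) * Complex.I_sq
  rw [s1, s2]
  generalize (∑ j, ((x j : ℂ) - v j) * m1 j) = S1
  generalize (∑ j, ∑ l, D j l * A l j) = T
  change (h : ℂ) / Complex.I * (H * (_ - _ * (_ + 1 / 2 * ∑ j, ∑ l, D j l * m2 j l))) + _ + _ = 0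
  generalize (∑ j, ∑ l, D j l * m2 j l) = S2
  generalize A.mulVec (fun j => (x j : ℂ)) ⬝ᵥ (fun j => (x j : ℂ)) = q
  generalize v ⬝ᵥ A.mulVec (fun j => (x j : ℂ)) = r
  simp only [Complex.div_I]
  field_simp
  ring_nf
  try simp only [Complex.I_sq]
  try ring
end
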